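/- arXiv:math/0702401 — 5 statements merged into one kernel-verified Lean document; each statement's English description precedes it below -/
import Mathlib

section
/- For every τ in the complex upper half-plane ℍ, with x = x₁₀(τ) = 2θ₃(512τ)/θ₂(512τ), y = y₁₀(τ) = θ₂(8τ)/θ₂(512τ), u = (x−2)⁸ and v = x(x+2)⁴(x²+4), one has y⁶⁴ − 4096·v·y⁵⁶ − 61696·u·v·y⁴⁸ − 512·u·v·(253u + 30464v)·y⁴⁰ − 16·u·v·(4619u² − 525568·u·v + 33488896·v²)·y³² − 512·u·v·(31u³ + 35712u²v + 196608·u·v² + 8388608·v³)·y²⁴ − 32·u³·v·(47u² − 320000·u·v + 17268736·v²)·y¹⁶ − 64·u³·v·(u³ + 5248·u²·v + 1310720·u·v² + 67108864·v³)·y⁸ − u⁷·v = 0 (a defining equation of X₀(1024)). -/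
open Complex Filter Topology

/-- Jacobi theta function θ₂(τ) = ∑_{n∈ℤ} exp(πiτ(n+1/2)²). -/
noncomputable def θ₂ (τ : ℂ) : ℂ :=
  ∑' n : ℤ, Complex.exp (Real.pi * Complex.I * τ * ((n : ℂ) + 1/2)^2)

/-- Jacobi theta function θ₃(τ) = ∑_{n∈ℤ} exp(πiτn²). -/
noncomputable def θ₃ (τ : ℂ) : ℂ :=
  ∑' n : ℤ, Complex.exp (Real.pi * Complex.I * τ * (n : ℂ)^2)

/-- x_n(τ) = 2θ₃(2^{n-1}τ)/θ₂(2^{n-1}τ). -/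
noncomputable def xfun (n : ℕ) (τ : ℂ) : ℂ :=
  2 * θ₃ (2^(n-1) * τ) / θ₂ (2^(n-1) * τ)

/-- y_n(τ) = θ₂(8τ)/θ₂(2^{n-1}τ). -/
noncomputable def yfun (n : ℕ) (τ : ℂ) : ℂ :=
  θ₂ (8 * τ) / θ₂ (2^(n-1) * τ)

lemma hasSum_split {α β γ : Type*} {f : γ → ℂ} {a b : ℂ} (i : α → γ) (j : β → γ)
    (hi : Function.Injective i) (hj : Function.Injective j)
    (hd : ∀ p q, i p ≠ j q) (hc : ∀ z, (∃ p, i p = z) ∨ ∃ q, j q = z)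
    (ha : HasSum (f ∘ i) a) (hb : HasSum (f ∘ j) b) : HasSum f (a + b) := by
  refine (hi.hasSum_range_iff.2 ha).add_isCompl ?_ (hj.hasSum_range_iff.2 hb)
  constructor
  · rw [Set.disjoint_iff]
    rintro _ ⟨⟨p, rfl⟩, ⟨q, hq⟩⟩
    exact hd p q hq.symm
  · rw [codisjoint_iff_le_sup]
    intro z _
    exact hc z

lemma theta3_hasSum (τ : ℂ) (hτ : 0 < τ.im) :
    HasSum (fun n : ℤ => Complex.exp (Real.pi * Complex.I * τ * (n : ℂ)^2)) (θ₃ τ) := by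
  have h := (summable_jacobiTheta₂_term_iff 0 τ).2 hτ
  refine Summable.hasSum (h.congr fun n => ?_)
  unfold jacobiTheta₂_term
  congr 1
  ring

lemma theta2_hasSum (τ : ℂ) (hτ : 0 < τ.im) :
    HasSum (fun n : ℤ => Complex.exp (Real.pi * Complex.I * τ * ((n : ℂ) + 1/2)^2)) (θ₂ τ) := by
  have h := ((summable_jacobiTheta₂_term_iff (τ / 2) τ).2 hτ).mul_left
    (Complex.exp (Real.pi * Complex.I * τ / 4))
  refine Summable.hasSum (h.congr fun n => ?_)
  unfold jacobiTheta₂_term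
  rw [← Complex.exp_add]
  congr 1
  ring

lemma hasSum_mul_pair {f g : ℤ → ℂ} {a b : ℂ} (hf : HasSum f a) (hg : HasSum g b) :
    HasSum (fun p : ℤ × ℤ => f p.1 * g p.2) (a * b) :=
  hf.mul hg (summable_mul_of_summable_norm hf.summable.norm hg.summable.norm)

lemma theta3_quad (τ : ℂ) (hτ : 0 < τ.im) : θ₃ τ = θ₃ (4 * τ) + θ₂ (4 * τ) := by
  have h4 : 0 < (4 * τ).im := by simpa using hτ
  refine (theta3_hasSum τ hτ).unique ?_
  refine hasSum_split (fun k : ℤ => 2 * k) (fun k : ℤ => 2 * k + 1) ?_ ?_ ?_ ?_ ?_ ?_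
  · intro a b h; simp only at h; omega
  · intro a b h; simp only at h; omega
  · intro a b h; omega
  · intro z
    rcases Int.even_or_odd' z with ⟨k, h | h⟩
    · exact Or.inl ⟨k, h.symm⟩
    · exact Or.inr ⟨k, h.symm⟩
  · convert theta3_hasSum _ h4 using 2 with n
    simp only [Function.comp]
    congr 1
    push_cast
    ring
  · convert theta2_hasSum _ h4 using 2 with n
    simp only [Function.comp]
    congr 1
    push_cast
    ring

lemma theta3_sq (τ : ℂ) (hτ : 0 < τ.im) : θ₃ τ ^ 2 = θ₃ (2 * τ) ^ 2 + θ₂ (2 * τ) ^ 2 := by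
  have h2 : 0 < (2 * τ).im := by simpa using hτ
  rw [sq, sq, sq]
  refine (hasSum_mul_pair (theta3_hasSum τ hτ) (theta3_hasSum τ hτ)).unique ?_
  refine hasSum_split (fun p : ℤ × ℤ => (p.1 + p.2, p.1 - p.2))
    (fun p : ℤ × ℤ => (p.1 + p.2 + 1, p.1 - p.2)) ?_ ?_ ?_ ?_ ?_ ?_
  · rintro ⟨a, b⟩ ⟨c, d⟩ h; simp only [Prod.mk.injEq] at h ⊢; omega
  · rintro ⟨a, b⟩ ⟨c, d⟩ h; simp only [Prod.mk.injEq] at h ⊢; omega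
  · rintro ⟨a, b⟩ ⟨c, d⟩ h; simp only [Prod.mk.injEq] at h; omega
  · rintro ⟨m, n⟩
    rcases Int.even_or_odd' (m + n) with ⟨k, h | h⟩
    · exact Or.inl ⟨(k, k - n), by simp only [Prod.mk.injEq]; omega⟩
    · exact Or.inr ⟨(k, k - n), by simp only [Prod.mk.injEq]; omega⟩
  · convert hasSum_mul_pair (theta3_hasSum _ h2) (theta3_hasSum _ h2) using 2 with n
    simp only [Function.comp, ← Complex.exp_add]
    congr 1
    push_cast
    ring
  · convert hasSum_mul_pair (theta2_hasSum _ h2) (theta2_hasSum _ h2) using 2 with n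
    simp only [Function.comp, ← Complex.exp_add]
    congr 1
    push_cast
    ring

lemma theta2_sq (τ : ℂ) (hτ : 0 < τ.im) : θ₂ τ ^ 2 = 2 * θ₂ (2 * τ) * θ₃ (2 * τ) := by
  have h2 : 0 < (2 * τ).im := by simpa using hτ
  have e : 2 * θ₂ (2 * τ) * θ₃ (2 * τ) =
    θ₂ (2 * τ) * θ₃ (2 * τ) + θ₃ (2 * τ) * θ₂ (2 * τ) := by ring
  rw [sq, e]
  refine (hasSum_mul_pair (theta2_hasSum τ hτ) (theta2_hasSum τ hτ)).unique ?_
  refine hasSum_split (fun p : ℤ × ℤ => (p.1 + p.2, p.1 - p.2))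
    (fun p : ℤ × ℤ => (p.1 + p.2, p.1 - p.2 - 1)) ?_ ?_ ?_ ?_ ?_ ?_
  · rintro ⟨a, b⟩ ⟨c, d⟩ h; simp only [Prod.mk.injEq] at h ⊢; omega
  · rintro ⟨a, b⟩ ⟨c, d⟩ h; simp only [Prod.mk.injEq] at h ⊢; omega
  · rintro ⟨a, b⟩ ⟨c, d⟩ h; simp only [Prod.mk.injEq] at h; omega
  · rintro ⟨m, n⟩
    rcases Int.even_or_odd' (m + n) with ⟨k, h | h⟩
    · exact Or.inl ⟨(k, k - n), by simp only [Prod.mk.injEq]; omega⟩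
    · exact Or.inr ⟨(k + 1, k - n), by simp only [Prod.mk.injEq]; omega⟩
  · convert hasSum_mul_pair (theta2_hasSum _ h2) (theta3_hasSum _ h2) using 2 with n
    simp only [Function.comp, ← Complex.exp_add]
    congr 1
    push_cast
    ring
  · convert hasSum_mul_pair (theta3_hasSum _ h2) (theta2_hasSum _ h2) using 2 with n
    simp only [Function.comp, ← Complex.exp_add]
    congr 1
    push_cast
    ring

/-- θ₂(τ)⁸ in terms of the theta constants at 8τ. -/
lemma theta2_pow_eight (τ : ℂ) (hτ : 0 < τ.im) :
    θ₂ τ ^ 8 = 128 * θ₂ (8 * τ) * θ₃ (8 * τ) * (θ₂ (8 * τ) ^ 2 + θ₃ (8 * τ) ^ 2)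
      * (θ₂ (8 * τ) + θ₃ (8 * τ)) ^ 4 := by
  have h2 : 0 < (2 * τ).im := by simpa using hτ
  have h4 : 0 < (4 * τ).im := by simpa using hτ
  have e1 := theta2_sq τ hτ
  have e2 := theta2_sq _ h2
  have e3 := theta3_quad _ h2
  have e4 := theta2_sq _ h4
  have e5 := theta3_sq _ h4
  rw [show 2 * (2 * τ) = 4 * τ by ring] at e2
  rw [show 4 * (2 * τ) = 8 * τ by ring] at e3
  rw [show 2 * (4 * τ) = 8 * τ by ring] at e4 e5
  calc θ₂ τ ^ 8 = (θ₂ τ ^ 2) ^ 4 := by ring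
    _ = 16 * (θ₂ (2 * τ) ^ 2) ^ 2 * θ₃ (2 * τ) ^ 4 := by rw [e1]; ring
    _ = 64 * θ₂ (4 * τ) ^ 2 * θ₃ (4 * τ) ^ 2 * θ₃ (2 * τ) ^ 4 := by rw [e2]; ring
    _ = _ := by rw [e3, e4, e5]; ring

/-- θ₄(2τ)⁸ = θ₃(τ)⁴ θ₄(τ)⁴ without mentioning θ₄. -/
lemma theta4_pow_eight (τ : ℂ) (hτ : 0 < τ.im) :
    (θ₃ (8 * τ) - θ₂ (8 * τ)) ^ 8 = θ₃ τ ^ 4 * (θ₃ τ ^ 4 - θ₂ τ ^ 4) := by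
  have h2 : 0 < (2 * τ).im := by simpa using hτ
  have h4 : 0 < (4 * τ).im := by simpa using hτ
  have e1 := theta2_sq τ hτ
  have e2 := theta2_sq _ h2
  have e3 := theta3_quad _ hτ
  have e3' := theta3_sq _ h2
  have e4 := theta2_sq _ h4
  have e5 := theta3_sq _ h4
  rw [show 2 * (2 * τ) = 4 * τ by ring] at e2 e3'
  rw [show 2 * (4 * τ) = 8 * τ by ring] at e4 e5
  have f1 : θ₂ τ ^ 4 = 8 * θ₂ (4 * τ) * θ₃ (4 * τ) * (θ₃ (4 * τ) ^ 2 + θ₂ (4 * τ) ^ 2) := by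
    calc θ₂ τ ^ 4 = (θ₂ τ ^ 2) ^ 2 := by ring
      _ = 4 * θ₂ (2 * τ) ^ 2 * θ₃ (2 * τ) ^ 2 := by rw [e1]; ring
      _ = _ := by rw [e2, e3']; ring
  have f2 : (θ₃ (8 * τ) - θ₂ (8 * τ)) ^ 2 = θ₃ (4 * τ) ^ 2 - θ₂ (4 * τ) ^ 2 := by
    rw [e4, e5]; ring
  calc (θ₃ (8 * τ) - θ₂ (8 * τ)) ^ 8 = ((θ₃ (8 * τ) - θ₂ (8 * τ)) ^ 2) ^ 4 := by ring
    _ = _ := by rw [f2, f1, e3]; ring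

lemma poly_identity (P Q c w u v : ℂ)
    (hw : w = 128 * P * Q * (P ^ 2 + Q ^ 2) * (P + Q) ^ 4 * c)
    (hu : u = 256 * (Q ^ 4 * (Q ^ 4 - P ^ 4)) * c) (hv : v = P ^ 8 * c) :
    w ^ 8 - 4096 * v * w ^ 7 - 61696 * u * v * w ^ 6
      - 512 * u * v * (253 * u + 30464 * v) * w ^ 5
      - 16 * u * v * (4619 * u ^ 2 - 525568 * u * v + 33488896 * v ^ 2) * w ^ 4
      - 512 * u * v * (31 * u ^ 3 + 35712 * u ^ 2 * v + 196608 * u * v ^ 2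
          + 8388608 * v ^ 3) * w ^ 3
      - 32 * u ^ 3 * v * (47 * u ^ 2 - 320000 * u * v + 17268736 * v ^ 2) * w ^ 2
      - 64 * u ^ 3 * v * (u ^ 3 + 5248 * u ^ 2 * v + 1310720 * u * v ^ 2
          + 67108864 * v ^ 3) * w
      - u ^ 7 * v = 0 := by
  subst hw hu hv
  ring

theorem X0_1024_equation (τ : ℂ) (hτ : 0 < τ.im)
    (x y u v : ℂ) (hx : x = xfun 10 τ) (hy : y = yfun 10 τ)
    (hu : u = (x - 2) ^ 8) (hv : v = x * (x + 2) ^ 4 * (x ^ 2 + 4)) :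
    y ^ 64 - 4096 * v * y ^ 56 - 61696 * u * v * y ^ 48
      - 512 * u * v * (253 * u + 30464 * v) * y ^ 40
      - 16 * u * v * (4619 * u ^ 2 - 525568 * u * v + 33488896 * v ^ 2) * y ^ 32
      - 512 * u * v * (31 * u ^ 3 + 35712 * u ^ 2 * v + 196608 * u * v ^ 2
          + 8388608 * v ^ 3) * y ^ 24
      - 32 * u ^ 3 * v * (47 * u ^ 2 - 320000 * u * v + 17268736 * v ^ 2) * y ^ 16
      - 64 * u ^ 3 * v * (u ^ 3 + 5248 * u ^ 2 * v + 1310720 * u * v ^ 2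
          + 67108864 * v ^ 3) * y ^ 8
      - u ^ 7 * v = 0 := by
  have hx' : x = 2 * θ₃ (512 * τ) / θ₂ (512 * τ) := by rw [hx, xfun]; norm_num
  have hy' : y = θ₂ (8 * τ) / θ₂ (512 * τ) := by rw [hy, yfun]; norm_num
  by_cases ha : θ₂ (512 * τ) = 0
  · rw [ha, div_zero] at hx' hy'
    subst hx' hy'
    simp only [zero_mul] at hv
    rw [hv]
    ring
  have h8 : 0 < (8 * τ).im := by simpa using hτ
  have h64 : 0 < (64 * τ).im := by simpa using hτ
  have t1 := theta2_pow_eight _ h8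
  have t2 := theta2_pow_eight _ h64
  have t3 := theta4_pow_eight _ h64
  rw [show 8 * (8 * τ) = 64 * τ by ring] at t1
  rw [show 8 * (64 * τ) = 512 * τ by ring] at t2 t3
  have key := poly_identity (θ₂ (64 * τ)) (θ₃ (64 * τ)) (1 / θ₂ (512 * τ) ^ 8) (y ^ 8) u v
    (by rw [← t1, hy']; ring)
    (by rw [← t3, hu, hx']; field_simp; ring)
    (by rw [t2, hv, hx']; field_simp; ring)
  rw [← key]
  ring
end

section
/- For every even integer n ≥ 6, the function y_n is a modular function on Γ₀(2ⁿ): for every matrix (a b; c d) in SL₂(ℤ) with 2ⁿ ∣ c and every τ in the complex upper half-plane ℍ, y_n((aτ+b)/(cτ+d)) = y_n(τ). -/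
open Complex Filter Topology

lemma sum_shift (N : ℕ) (f : ℤ → ℂ) (hf : ∀ x, f (x + N) = f x) (t : ℤ) :
    ∑ i ∈ Finset.range N, f (i + t) = ∑ i ∈ Finset.range N, f i := by
  have step : ∀ t : ℤ, ∑ i ∈ Finset.range N, f (i + (t + 1)) =
      ∑ i ∈ Finset.range N, f (i + t) := by
    intro t
    have h1 := Finset.sum_range_succ (fun i : ℕ => f (i + t)) N
    have h2 := Finset.sum_range_succ' (fun i : ℕ => f (i + t)) N
    have h3 : f ((N : ℤ) + t) = f (((0 : ℕ) : ℤ) + t) := by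
      rw [add_comm, hf]; simp
    rw [h1, h3] at h2
    have h4 := add_right_cancel h2
    rw [h4]
    refine Finset.sum_congr rfl fun i _ => ?_
    congr 1; push_cast; ring
  induction t using Int.induction_on with
  | zero => simp
  | succ n ih => rw [step, ih]
  | pred n ih => rw [← ih, ← step (-(n : ℤ) - 1)]; simp

lemma sum_anti (N : ℕ) (f : ℤ → ℂ) (hf : ∀ x, f (x + N) = -f x) :
    ∑ i ∈ Finset.range (2 * N), f i = 0 := by
  rw [two_mul, Finset.sum_range_add, ← Finset.sum_add_distrib]
  refine Finset.sum_eq_zero fun i _ => ?_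
  push_cast
  rw [add_comm (N : ℤ), hf]; ring

lemma sum_double (N : ℕ) (f : ℤ → ℂ) :
    ∑ i ∈ Finset.range (2 * N), f i =
      ∑ i ∈ Finset.range N, f (2 * i) + ∑ i ∈ Finset.range N, f (2 * i + 1) := by
  induction N with
  | zero => simp
  | succ N ih =>
    rw [show 2 * (N + 1) = 2 * N + 1 + 1 by ring, Finset.sum_range_succ, Finset.sum_range_succ, ih,
      Finset.sum_range_succ, Finset.sum_range_succ]
    push_cast; ring

lemma tsum_residues (N : ℕ) [NeZero N] (f : ℤ → ℂ) (hf : Summable f) :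
    ∑' n, f n = ∑ s ∈ Finset.range N, ∑' k : ℤ, f (s + N * k) := by
  let e : Fin N × ℤ ≃ ℤ := (Equiv.prodComm _ _).trans (Int.divModEquiv N).symm
  rw [← e.tsum_eq f, Summable.tsum_prod (f := fun c => f (e c)) (e.summable_iff.mpr hf),
    tsum_fintype, Finset.sum_range]
  refine Finset.sum_congr rfl fun s _ => tsum_congr fun k => ?_
  simp [e, Int.divModEquiv]
  congr 1; ring

/-- quadratic Gauss-type sum -/
noncomputable def gE (a : ℤ) (C : ℕ) : ℂ :=
  ∑ s ∈ Finset.range (2 * C), Complex.exp (Real.pi * I * a * ((s : ℤ) : ℂ) ^ 2 / C)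

lemma exp_add_even (x y : ℂ) (n : ℤ) (h : x = y + n * (2 * Real.pi * I)) : Complex.exp x = Complex.exp y := by
  rw [h, Complex.exp_add, Complex.exp_int_mul_two_pi_mul_I, mul_one]

lemma exp_add_odd (x y : ℂ) (n : ℤ) (h : x = y + n * (2 * Real.pi * I) + Real.pi * I) :
    Complex.exp x = -Complex.exp y := by
  rw [h, Complex.exp_add, Complex.exp_pi_mul_I, Complex.exp_add,
    Complex.exp_int_mul_two_pi_mul_I]; ring

lemma gE_four (a : ℤ) (C : ℕ) (hC : 0 < C) (hCe : Even C) (ha : Odd a) :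
    gE a (4 * C) = 2 * gE a C := by
  have hC0 : (C : ℂ) ≠ 0 := by exact_mod_cast hC.ne'
  obtain ⟨C2, hC2⟩ := hCe
  have hC2' : (C : ℂ) = C2 + C2 := by exact_mod_cast hC2
  obtain ⟨a2, ha2⟩ := ha
  have ha2' : (a : ℂ) = 2 * a2 + 1 := by exact_mod_cast ha2
  unfold gE
  rw [sum_double (4 * C) (fun s : ℤ => Complex.exp (Real.pi * I * a * (s : ℂ) ^ 2 / ((4 * C : ℕ) : ℂ)))]
  have hodd : ∑ i ∈ Finset.range (4 * C), (fun s : ℤ => Complex.exp (Real.pi * I * a * ((2 * s + 1 : ℤ) : ℂ) ^ 2 / ((4 * C : ℕ) : ℂ))) (i : ℤ) = 0 := by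
    have hper : ∀ x : ℤ, Complex.exp (Real.pi * I * a * ((2 * (x + C) + 1 : ℤ) : ℂ) ^ 2 / ((4 * C : ℕ) : ℂ)) = -Complex.exp (Real.pi * I * a * ((2 * x + 1 : ℤ) : ℂ) ^ 2 / ((4 * C : ℕ) : ℂ)) := by
      intro x
      apply exp_add_odd _ _ (2 * a2 * (x + C2) + a2 + x + C2)
      push_cast
      field_simp
      rw [ha2', hC2']
      ring
    rw [show Finset.range (4 * C) = Finset.range (2 * C + 2 * C) by congr 1; ring, Finset.sum_range_add]
    have h1 := sum_anti C (fun x : ℤ => Complex.exp (Real.pi * I * a * ((2 * x + 1 : ℤ) : ℂ) ^ 2 / ((4 * C : ℕ) : ℂ))) hper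
    have h2 := sum_anti C (fun x : ℤ => Complex.exp (Real.pi * I * a * ((2 * ((2 * C : ℕ) + x) + 1 : ℤ) : ℂ) ^ 2 / ((4 * C : ℕ) : ℂ)))
      (fun x => by rw [← hper]; simp only [add_assoc])
    simp only [Nat.cast_add]
    rw [h1, h2, add_zero]
  have hev : ∑ i ∈ Finset.range (4 * C), (fun s : ℤ => Complex.exp (Real.pi * I * a * ((2 * s : ℤ) : ℂ) ^ 2 / ((4 * C : ℕ) : ℂ))) (i : ℤ) =
      2 * ∑ s ∈ Finset.range (2 * C), Complex.exp (Real.pi * I * a * ((s : ℤ) : ℂ) ^ 2 / C) := by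
    rw [show Finset.range (4 * C) = Finset.range (2 * C + 2 * C) by congr 1; ring, Finset.sum_range_add, two_mul (∑ s ∈ _, _)]
    congr 1
    · refine Finset.sum_congr rfl fun i _ => ?_
      simp only
      congr 1; push_cast; field_simp; ring
    · refine Finset.sum_congr rfl fun i _ => ?_
      simp only
      apply exp_add_even _ _ (a * (2 * i + 2 * C))
      push_cast; field_simp; ring
  simp only at hodd hev
  rw [hodd, hev, add_zero]

lemma theta_summable {τ : ℂ} (hτ : 0 < τ.im) :
    Summable fun n : ℤ => Complex.exp (Real.pi * I * τ * ((n : ℂ) + 1/2)^2) := by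
  have h := ((summable_jacobiTheta₂_term_iff (τ / 2) τ).mpr hτ).mul_left
    (Complex.exp (Real.pi * I * τ / 4))
  refine h.congr fun n => ?_
  rw [jacobiTheta₂_term, ← Complex.exp_add]
  congr 1; ring

lemma theta_inner_sum (C : ℕ) (hC : 0 < C) (w : ℂ) (hw : w ≠ 0) (s : ℂ) :
    ∑' k : ℤ, Complex.exp (Real.pi * I * w * (s + 1/2 + 2 * C * k) ^ 2) =
      1 / (-I * (4 * C ^ 2 * w)) ^ (1 / 2 : ℂ) *
        jacobiTheta₂ ((s + 1/2) / (2 * C)) (-1 / (4 * C ^ 2 * w)) := by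
  have hC0 : (C : ℂ) ≠ 0 := by exact_mod_cast hC.ne'
  have h := jacobiTheta₂_functional_equation (2 * C * w * (s + 1/2)) (4 * C ^ 2 * w)
  have e1 : 2 * C * w * (s + 1/2) / (4 * C ^ 2 * w) = (s + 1/2) / (2 * C) := by
    field_simp; ring
  rw [e1] at h
  have e2 : ∑' k : ℤ, Complex.exp (Real.pi * I * w * (s + 1/2 + 2 * C * k) ^ 2) =
      Complex.exp (Real.pi * I * w * (s + 1/2) ^ 2) *
        jacobiTheta₂ (2 * C * w * (s + 1/2)) (4 * C ^ 2 * w) := by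
    rw [jacobiTheta₂, ← tsum_mul_left]
    refine tsum_congr fun k => ?_
    rw [jacobiTheta₂_term, ← Complex.exp_add]
    congr 1; ring
  rw [e2, h]
  have e3 : Complex.exp (Real.pi * I * w * (s + 1/2) ^ 2) *
      Complex.exp (-Real.pi * I * (2 * C * w * (s + 1/2)) ^ 2 / (4 * C ^ 2 * w)) = 1 := by
    rw [← Complex.exp_add, ← Complex.exp_zero]
    congr 1; field_simp; ring
  linear_combination (1 / (-I * (4 * C ^ 2 * w)) ^ (1 / 2 : ℂ) *
        jacobiTheta₂ ((s + 1/2) / (2 * C)) (-1 / (4 * C ^ 2 * w))) * e3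

lemma theta_transform (a b d : ℤ) (C : ℕ) (hC : 0 < C) (hCe : Even C)
    (hdet : a * d - 8 * b * C = 1) (σ : ℂ) (hσ : 0 < σ.im) :
    θ₂ ((a * σ + 8 * b) / (C * σ + d)) =
      1 / (4 * I * C / (C * σ + d)) ^ (1 / 2 : ℂ) * gE a C * θ₂ σ := by
  have hC0 : (C : ℂ) ≠ 0 := by exact_mod_cast hC.ne'
  have hC0' : (0 : ℝ) < C := by exact_mod_cast hC
  have hdet' : (a : ℂ) * d - 8 * b * C = 1 := by exact_mod_cast hdet
  have hj : (C * σ + d : ℂ) ≠ 0 := by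
    intro h
    have := congrArg Complex.im h
    simp at this
    rcases this with h | h
    · exact hC.ne' h
    · exact hσ.ne' h
  have hjim : 0 < (C * σ + d : ℂ).im := by simp; positivity
  obtain ⟨C2, hC2⟩ := hCe
  have hC2' : (C : ℂ) = C2 + C2 := by exact_mod_cast hC2
  have had : Odd (a * d) := ⟨4 * b * C, by linarith⟩
  obtain ⟨⟨a2, ha2⟩, ⟨d2, hd2⟩⟩ := Int.odd_mul.mp had
  have ha2' : (a : ℂ) = 2 * a2 + 1 := by exact_mod_cast ha2
  have hd2' : (d : ℂ) = 2 * d2 + 1 := by exact_mod_cast hd2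
  set w : ℂ := -1 / (C * (C * σ + d)) with hw
  have hw0 : w ≠ 0 := by rw [hw]; exact div_ne_zero (by norm_num) (mul_ne_zero hC0 hj)
  have hsplit : (a * σ + 8 * b) / (C * σ + d) = a / C + w := by
    rw [hw, div_add_div _ _ hC0 (mul_ne_zero hC0 hj), div_eq_div_iff hj (mul_ne_zero hC0 (mul_ne_zero hC0 hj))]
    linear_combination (-(C * (C * σ + d)) : ℂ) * hdet'
  have hwim : 0 < w.im := by
    have : w = -((C : ℂ) * (C * σ + d))⁻¹ := by rw [hw]; ring
    rw [this, neg_im, inv_im]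
    have h1 : 0 < ((C : ℂ) * (C * σ + d)).im := by
      rw [← ofReal_natCast, im_ofReal_mul]; exact mul_pos hC0' hjim
    have h2 : 0 < normSq ((C : ℂ) * (C * σ + d)) := normSq_pos.mpr (mul_ne_zero hC0 hj)
    rw [neg_div, neg_neg]
    positivity
  have him : 0 < (a / C + w : ℂ).im := by
    have : ((a : ℂ) / C).im = 0 := by
      rw [show (a : ℂ) / C = ((a / C : ℝ) : ℂ) by push_cast; rfl, ofReal_im]
    rw [add_im, this]; linarith
  have : NeZero (2 * C) := ⟨by omega⟩
  set K : ℂ := 1 / (4 * I * C / (C * σ + d)) ^ (1 / 2 : ℂ) with hK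
  have hKe : -I * (4 * C ^ 2 * w) = 4 * I * C / (C * σ + d) := by rw [hw]; field_simp
  have hTe : -1 / (4 * C ^ 2 * w) = (C * σ + d) / (4 * C) := by rw [hw]; field_simp
  have hTim : 0 < ((C * σ + d) / (4 * C) : ℂ).im := by
    rw [show (4 * C : ℂ) = ((4 * C : ℝ) : ℂ) by push_cast; rfl, div_ofReal_im]; positivity
  rw [hsplit, θ₂, tsum_residues (2 * C) _ (theta_summable him)]
  have step1 : ∀ s ∈ Finset.range (2 * C),
      ∑' k : ℤ, Complex.exp (Real.pi * I * (a / C + w) *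
        (((((s : ℤ) + ((2 * C : ℕ) : ℤ) * k : ℤ)) : ℂ) + 1/2) ^ 2) =
      K * ∑' m : ℤ, Complex.exp (Real.pi * I * a / C * (s + 1/2) ^ 2) *
        jacobiTheta₂_term m ((s + 1/2) / (2 * C)) ((C * σ + d) / (4 * C)) := by
    intro s _
    have h1 : ∀ k : ℤ, Complex.exp (Real.pi * I * (a / C + w) *
        (((((s : ℤ) + ((2 * C : ℕ) : ℤ) * k : ℤ)) : ℂ) + 1/2) ^ 2) =
        Complex.exp (Real.pi * I * a / C * (s + 1/2) ^ 2) *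
          Complex.exp (Real.pi * I * w * ((s : ℂ) + 1/2 + 2 * C * k) ^ 2) := by
      intro k
      rw [← Complex.exp_add]
      apply exp_add_even _ _ (a * ((2 * s + 1) * k + 2 * C * k ^ 2))
      push_cast; field_simp; ring
    simp_rw [h1]
    rw [tsum_mul_left, tsum_mul_left, theta_inner_sum C hC w hw0, hKe, hTe, jacobiTheta₂]
    ring
  rw [Finset.sum_congr rfl step1, ← Finset.mul_sum, ← Summable.tsum_finsetSum
    (fun s _ => ((summable_jacobiTheta₂_term_iff _ _).mpr hTim).mul_left _), mul_assoc K]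
  congr 1
  have step2 : ∀ m : ℤ, ∑ s ∈ Finset.range (2 * C),
      Complex.exp (Real.pi * I * a / C * ((s : ℂ) + 1/2) ^ 2) *
        jacobiTheta₂_term m ((s + 1/2) / (2 * C)) ((C * σ + d) / (4 * C)) =
      Complex.exp (Real.pi * I * σ * (m / 2) ^ 2) * ∑ s ∈ Finset.range (2 * C),
        Complex.exp (Real.pi * I * a / (4 * C) * (2 * (s : ℂ) + 1 + d * m) ^ 2) := by
    intro m
    rw [Finset.mul_sum]
    refine Finset.sum_congr rfl fun s _ => ?_
    rw [jacobiTheta₂_term, ← Complex.exp_add, ← Complex.exp_add]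
    apply exp_add_even _ _ (-(b * (d * m ^ 2 + 2 * (2 * s + 1) * m)))
    push_cast
    field_simp
    linear_combination (-4 * (d * m ^ 2 + 2 * (2 * s + 1) * m) : ℂ) * hdet'
  rw [tsum_congr step2]
  rw [← Function.Injective.tsum_eq (g := fun j : ℤ => 2 * j + 1)
    (fun x y h => by simpa using h), θ₂, ← tsum_mul_left]
  · refine tsum_congr fun j => ?_
    rw [mul_comm]
    congr 1
    · rw [gE, ← sum_shift (2 * C) (fun s : ℤ => Complex.exp (Real.pi * I * a * (s : ℂ) ^ 2 / C)) ?_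
        (1 + d2 + d * j)]
      · refine Finset.sum_congr rfl fun s _ => ?_
        congr 1
        push_cast
        rw [hd2']
        field_simp
        ring
      · intro x
        apply exp_add_even _ _ (a * (2 * x + 2 * C))
        push_cast; field_simp; ring
    · congr 1; push_cast; ring
  · intro m hm
    by_contra hmo
    have hme : Even m := by
      rw [← Int.not_odd_iff_even]
      rintro ⟨j, hj⟩
      exact hmo ⟨j, hj.symm⟩
    obtain ⟨j, rfl⟩ := hme
    apply hm
    have := sum_anti C (fun s : ℤ => Complex.exp (Real.pi * I * a / (4 * C) *
      (2 * (s : ℂ) + 1 + d * ((j + j : ℤ) : ℂ)) ^ 2)) ?_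
    · simp only [Int.cast_natCast] at this
      simp only [this, mul_zero]
    · intro x
      apply exp_add_odd _ _ (2 * a2 * (x + d * j + C2) + a2 + x + d * j + C2)
      push_cast
      field_simp
      rw [ha2', hC2']
      ring

lemma gE_pow (a : ℤ) (C : ℕ) (hC : 0 < C) (hCe : Even C) (ha : Odd a) (j : ℕ) :
    gE a (4 ^ j * C) = 2 ^ j * gE a C := by
  induction j with
  | zero => simp
  | succ j ih =>
    rw [show 4 ^ (j + 1) * C = 4 * (4 ^ j * C) by ring,
      gE_four a _ (by positivity) (hCe.mul_left _) ha, ih]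
    ring

lemma theta_I_ne_zero : θ₂ I ≠ 0 := by
  have hs := theta_summable (τ := I) (by simp)
  have he : ∀ n : ℤ, Complex.exp (Real.pi * I * I * ((n : ℂ) + 1/2)^2) =
      ((Real.exp (-Real.pi * ((n : ℝ) + 1/2)^2) : ℝ) : ℂ) := by
    intro n
    push_cast
    congr 1
    rw [mul_assoc (Real.pi : ℂ), I_mul_I]; ring
  simp_rw [he] at hs
  rw [θ₂]
  simp_rw [he]
  rw [← ofReal_tsum]
  rw [Complex.ofReal_ne_zero]
  exact ((Complex.summable_ofReal.mp hs).tsum_pos (fun n => (Real.exp_pos _).le) 0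
    (Real.exp_pos _)).ne'

lemma gE_ne_zero (a b d : ℤ) (C : ℕ) (hC : 0 < C) (hCe : Even C)
    (hdet : a * d - 8 * b * C = 1) : gE a C ≠ 0 := by
  have hdet' : (a : ℂ) * d - 8 * b * C = 1 := by exact_mod_cast hdet
  have hC0' : (0 : ℝ) < C := by exact_mod_cast hC
  have hq : (-C * I + a : ℂ) ≠ 0 := by
    intro h
    have := congrArg Complex.im h
    simp at this
    exact hC.ne' this
  set σ : ℂ := (d * I - 8 * b) / (-C * I + a) with hσ
  have hσim : 0 < σ.im := by
    have hn : 0 < normSq (-C * I + a : ℂ) := normSq_pos.mpr hq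
    have hdr : (a : ℝ) * d - 8 * b * C = 1 := by exact_mod_cast hdet
    have : σ.im = 1 / normSq (-C * I + a : ℂ) := by
      rw [hσ, div_im, ← hdr]
      simp
      ring
    rw [this]; positivity
  have hJ : (C * σ + d : ℂ) * (-C * I + a) = 1 := by
    rw [hσ, add_mul, mul_assoc, div_mul_cancel₀ _ hq]
    linear_combination hdet'
  have hJ0 : (C * σ + d : ℂ) ≠ 0 := left_ne_zero_of_mul_eq_one hJ
  have hI : (a * σ + 8 * b) / (C * σ + d) = I := by
    rw [div_eq_iff hJ0]
    have h1 : σ * (-C * I + a) = d * I - 8 * b := by rw [hσ, div_mul_cancel₀ _ hq]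
    linear_combination h1
  have h := theta_transform a b d C hC hCe hdet σ hσim
  rw [hI] at h
  intro h0
  rw [h0, mul_zero, zero_mul] at h
  exact theta_I_ne_zero h

lemma cpow_scale (j : ℕ) (x : ℂ) (hx : x ≠ 0) :
    ((4 : ℂ) ^ j * x) ^ (1 / 2 : ℂ) = 2 ^ j * x ^ (1 / 2 : ℂ) := by
  have h4 : (0 : ℝ) < 4 ^ j := by positivity
  have h4' : ((4 : ℂ) ^ j) = ((4 ^ j : ℝ) : ℂ) := by push_cast; rfl
  rw [h4', cpow_def_of_ne_zero (mul_ne_zero (by exact_mod_cast h4.ne') hx),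
    cpow_def_of_ne_zero hx, log_ofReal_mul h4 hx, add_mul, Complex.exp_add]
  congr 1
  have : Real.log (4 ^ j) = 2 * Real.log (2 ^ j) := by
    rw [show (4 : ℝ) ^ j = (2 ^ j) ^ 2 by rw [← pow_mul, mul_comm, pow_mul]; norm_num,
      Real.log_pow]
    norm_num
  rw [this]
  have h2 : ((2 * Real.log (2 ^ j) : ℝ) : ℂ) * (1 / 2) = ((Real.log (2 ^ j) : ℝ) : ℂ) := by
    push_cast; ring
  rw [h2, ← ofReal_exp, Real.exp_log (by positivity)]
  push_cast; rfl

lemma y_pos (j : ℕ) (a b d : ℤ) (c : ℕ) (hc : 0 < c)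
    (hdet : a * d - b * (16 * 4 ^ j * c) = 1) (τ : ℂ) (hτ : 0 < τ.im) :
    yfun (2 * j + 4) ((a * τ + b) / (((16 * 4 ^ j * c : ℕ) : ℂ) * τ + d)) =
      yfun (2 * j + 4) τ := by
  have hpow : (2 : ℂ) ^ (2 * j + 4 - 1) = 8 * 4 ^ j := by
    rw [show 2 * j + 4 - 1 = 2 * j + 3 by omega, pow_add, pow_mul]; norm_num; ring
  have had : Odd (a * d) := ⟨b * (8 * 4 ^ j * c), by linarith⟩
  have ha := (Int.odd_mul.mp had).1
  have hCe : Even (2 * c) := even_two_mul c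
  have h1 := theta_transform a b d (4 ^ j * (2 * c)) (by positivity) (hCe.mul_left _)
    (by push_cast; linarith) (8 * τ) (by simpa using hτ)
  have hd2 : a * d - 8 * (b * 4 ^ j) * (2 * c : ℕ) = 1 := by push_cast; linarith
  have him : 0 < (8 * 4 ^ j * τ).im := by
    rw [show (8 * 4 ^ j : ℂ) = ((8 * 4 ^ j : ℝ) : ℂ) by push_cast; rfl, im_ofReal_mul]
    positivity
  have h2 := theta_transform a (b * 4 ^ j) d (2 * c) (by positivity) hCe hd2 (8 * 4 ^ j * τ) him
  have hE := gE_ne_zero a (b * 4 ^ j) d (2 * c) (by positivity) hCe hd2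
  rw [gE_pow a _ (by positivity) hCe ha] at h1
  set J : ℂ := ((16 * 4 ^ j * c : ℕ) : ℂ) * τ + d with hJ
  have hJ0 : J ≠ 0 := by
    intro h
    have := congrArg Complex.im h
    rw [hJ, add_im, ← ofReal_natCast, im_ofReal_mul, intCast_im, add_zero, zero_im] at this
    have h3 : (0 : ℝ) < ((16 * 4 ^ j * c : ℕ) : ℝ) := by positivity
    exact (mul_pos h3 hτ).ne' this
  have j1 : ((4 ^ j * (2 * c) : ℕ) : ℂ) * (8 * τ) + d = J := by rw [hJ]; push_cast; ring
  have j2 : ((2 * c : ℕ) : ℂ) * (8 * 4 ^ j * τ) + d = J := by rw [hJ]; push_cast; ring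
  rw [j1] at h1
  rw [j2] at h2
  have hc0 : (c : ℂ) ≠ 0 := by exact_mod_cast hc.ne'
  have hX : 4 * I * ((2 * c : ℕ) : ℂ) / J ≠ 0 := by
    refine div_ne_zero (mul_ne_zero (mul_ne_zero (by norm_num) I_ne_zero) ?_) hJ0
    push_cast; exact mul_ne_zero (by norm_num) hc0
  rw [show 4 * I * ((4 ^ j * (2 * c) : ℕ) : ℂ) / J = 4 ^ j * (4 * I * ((2 * c : ℕ) : ℂ) / J) by
    push_cast; ring, cpow_scale j _ hX] at h1
  have hXr : (4 * I * ((2 * c : ℕ) : ℂ) / J) ^ (1 / 2 : ℂ) ≠ 0 := by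
    rw [Ne, cpow_eq_zero_iff]; tauto
  have e1 : 8 * ((a * τ + b) / J) = (a * (8 * τ) + 8 * b) / J := by ring
  have e2 : 8 * 4 ^ j * ((a * τ + b) / J) = (a * (8 * 4 ^ j * τ) + 8 * ((b * 4 ^ j : ℤ) : ℂ)) / J := by
    push_cast; ring
  have hfac : 1 / (4 * I * ((2 * c : ℕ) : ℂ) / J) ^ (1 / 2 : ℂ) * gE a (2 * c) ≠ 0 :=
    mul_ne_zero (one_div_ne_zero hXr) hE
  unfold yfun
  rw [hpow, e1, e2, h1, h2, ← mul_div_mul_left (θ₂ (8 * τ)) _ hfac]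
  congr 2
  have : (2 : ℂ) ^ j ≠ 0 := pow_ne_zero _ two_ne_zero
  generalize (4 * I * ((2 * c : ℕ) : ℂ) / J) ^ (1 / 2 : ℂ) = X at hXr
  field_simp

lemma theta_add_eight (τ : ℂ) (k : ℤ) : θ₂ (τ + 8 * k) = θ₂ τ := by
  unfold θ₂
  refine tsum_congr fun n => ?_
  apply exp_add_even _ _ (k * (4 * n ^ 2 + 4 * n + 1))
  push_cast; ring

lemma y_zero (n : ℕ) (hn : 6 ≤ n) (τ : ℂ) (k : ℤ) : yfun n (τ + k) = yfun n τ := by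
  unfold yfun
  obtain ⟨m, rfl⟩ : ∃ m, n = m + 4 := ⟨n - 4, by omega⟩
  have h1 : 8 * (τ + k) = 8 * τ + 8 * (k : ℂ) := by ring
  have h2 : (2 : ℂ) ^ (m + 4 - 1) * (τ + k) = 2 ^ (m + 4 - 1) * τ + 8 * ((2 ^ m * k : ℤ) : ℂ) := by
    rw [show m + 4 - 1 = m + 3 by omega, pow_add]; push_cast; ring
  rw [h1, h2, theta_add_eight, theta_add_eight]

theorem y_modular (n : ℕ) (hn : 6 ≤ n) (hn2 : Even n)
    (a b c d : ℤ) (hdet : a * d - b * c = 1) (hc : (2 ^ n : ℤ) ∣ c)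
    (τ : ℂ) (hτ : 0 < τ.im) :
    yfun n (((a : ℂ) * τ + b) / ((c : ℂ) * τ + d)) = yfun n τ := by
  obtain ⟨p, hp⟩ := hn2
  obtain ⟨j, hj⟩ : ∃ j, n = 2 * j + 4 := ⟨p - 2, by omega⟩
  have hpow : (2 : ℤ) ^ n = 16 * 4 ^ j := by
    rw [hj, pow_add, pow_mul]; norm_num; ring
  obtain ⟨c1, hc1⟩ := hc
  rw [hpow] at hc1
  rcases lt_trichotomy c1 0 with h | h | h
  · obtain ⟨k, hk⟩ := Int.eq_ofNat_of_zero_le (a := -c1) (by omega)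
    have hc2 : c = -(16 * 4 ^ j * k) := by rw [hc1]; linear_combination -(16 * 4 ^ j) * hk
    have := y_pos j (-a) (-b) (-d) k (by omega) (by rw [← hdet, hc2]; ring) τ hτ
    rw [← hj] at this
    rw [← this, ← neg_div_neg_eq]
    congr 2
    · push_cast; ring
    · rw [hc2]; push_cast; ring
  · have hc2 : c = 0 := by rw [hc1, h, mul_zero]
    subst hc2
    have hd : a * d = 1 := by linarith
    rcases Int.mul_eq_one_iff_eq_one_or_neg_one.mp hd with ⟨rfl, rfl⟩ | ⟨rfl, rfl⟩
    · have := y_zero n hn τ b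
      rw [← this]; congr 1; simp
    · have := y_zero n hn τ (-b)
      rw [← this]; congr 1; push_cast; ring
  · obtain ⟨k, hk⟩ := Int.eq_ofNat_of_zero_le (a := c1) (by omega)
    have hc2 : c = 16 * 4 ^ j * k := by rw [hc1, hk]
    have := y_pos j a b d k (by omega) (by rw [← hdet, hc2]) τ hτ
    rw [← hj] at this
    rw [← this, hc2]
    push_cast; rfl
end

section
/- For every odd integer n ≥ 5, every matrix (a b; c d) in SL₂(ℤ) with 2ⁿ ∣ c, and every τ in the complex upper half-plane ℍ, y_n((aτ+b)/(cτ+d)) = (2/d)·y_n(τ), where (2/d) is the Jacobi symbol, equal to (−1)^{(d²−1)/8} for the odd integer d. -/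
open Complex Filter Topology

lemma th2_eq (τ : ℂ) : θ₂ τ = cexp (Real.pi * I * τ / 4) * jacobiTheta₂ (τ / 2) τ := by
  unfold θ₂ jacobiTheta₂
  rw [← tsum_mul_left]
  refine tsum_congr fun n => ?_
  rw [jacobiTheta₂_term, ← Complex.exp_add]
  congr 1
  ring

lemma th2_summable {τ : ℂ} (hτ : 0 < τ.im) :
    Summable fun n : ℤ => cexp (Real.pi * I * τ * ((n : ℂ) + 1/2)^2) := by
  have h := ((summable_jacobiTheta₂_term_iff (τ / 2) τ).2 hτ).mul_left (cexp (Real.pi * I * τ / 4))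
  refine h.congr fun n => ?_
  rw [jacobiTheta₂_term, ← Complex.exp_add]
  congr 1
  ring

lemma th3_summable {τ : ℂ} (hτ : 0 < τ.im) :
    Summable fun n : ℤ => cexp (Real.pi * I * τ * (n : ℂ)^2) := by
  have h := ((summable_jacobiTheta₂_term_iff 0 τ).2 hτ)
  refine h.congr fun n => ?_
  rw [jacobiTheta₂_term]
  congr 1
  ring

/-- Splitting of pairs of integers according to the parity of the difference. -/
def pairSplit : (ℤ × ℤ) ⊕ (ℤ × ℤ) → ℤ × ℤ
  | Sum.inl p => (p.1 + p.2, p.1 - p.2)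
  | Sum.inr p => (p.1 + p.2, p.2 - p.1 - 1)

lemma pairSplit_bij : Function.Bijective pairSplit := by
  constructor
  · rintro (⟨a, b⟩ | ⟨a, b⟩) (⟨c, d⟩ | ⟨c, d⟩) h <;>
      simp only [pairSplit, Prod.mk.injEq] at h <;>
      obtain ⟨h1, h2⟩ := h <;> simp <;> omega
  · rintro ⟨m, n⟩
    rcases Int.even_or_odd' (m - n) with ⟨k, hk | hk⟩
    · exact ⟨Sum.inl (m - k, k), by simp only [pairSplit, Prod.mk.injEq]; omega⟩
    · exact ⟨Sum.inr (k, m - k), by simp only [pairSplit, Prod.mk.injEq]; omega⟩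

lemma th2_sq {τ : ℂ} (hτ : 0 < τ.im) : θ₂ τ * θ₂ τ = 2 * (θ₂ (2 * τ) * θ₃ (2 * τ)) := by
  have h2 : 0 < (2 * τ).im := by simpa using hτ
  have s1 := (th2_summable hτ).norm
  have s2 := (th2_summable h2).norm
  have s3 := (th3_summable h2).norm
  have e1 : θ₂ (2 * τ) * θ₃ (2 * τ) = _ := tsum_mul_tsum_of_summable_norm s2 s3
  have e2 : θ₂ τ * θ₂ τ = _ := tsum_mul_tsum_of_summable_norm s1 s1
  have hs := (summable_mul_of_summable_norm s2 s3).hasSum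
  rw [← e1] at hs
  rw [e2, two_mul]
  refine HasSum.tsum_eq ?_
  rw [← (Equiv.ofBijective _ pairSplit_bij).hasSum_iff]
  refine HasSum.sum ?_ ?_
  · convert hs using 1
    funext p
    simp only [Function.comp_apply, Equiv.ofBijective_apply, pairSplit]
    rw [← Complex.exp_add, ← Complex.exp_add]
    congr 1
    push_cast
    ring
  · convert hs using 1
    funext p
    simp only [Function.comp_apply, Equiv.ofBijective_apply, pairSplit]
    rw [← Complex.exp_add, ← Complex.exp_add]
    congr 1
    push_cast
    ring

/-- The basic quotient. -/
noncomputable def fq (τ : ℂ) : ℂ := θ₂ τ / θ₂ (2 * τ)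

lemma th2_add_one (τ : ℂ) : θ₂ (τ + 1) = cexp (Real.pi * I / 4) * θ₂ τ := by
  unfold θ₂
  rw [← tsum_mul_left]
  refine tsum_congr fun n => ?_
  obtain ⟨k, hk⟩ := Int.even_mul_succ_self n
  have hk' : (n : ℂ) * (n + 1) = k + k := by exact_mod_cast hk
  rw [← Complex.exp_add, Complex.exp_eq_exp_iff_exists_int]
  refine ⟨k, ?_⟩
  linear_combination (Real.pi * I) * hk'

lemma fq_add_one (τ : ℂ) : fq (τ + 1) = cexp (-(Real.pi * I / 4)) * fq τ := by
  unfold fq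
  rw [show 2 * (τ + 1) = (2 * τ + 1) + 1 by ring, th2_add_one, th2_add_one, th2_add_one,
    Complex.exp_neg]
  field_simp [Complex.exp_ne_zero]

lemma th2_inv (τ : ℂ) (hτ : τ ≠ 0) :
    θ₂ τ = 1 / (-I * τ) ^ (1 / 2 : ℂ) * jacobiTheta₂ (1 / 2) (-1 / τ) := by
  rw [th2_eq, jacobiTheta₂_functional_equation]
  rw [show τ / 2 / τ = 1 / 2 by field_simp]
  have : cexp (Real.pi * I * τ / 4) * cexp (-Real.pi * I * (τ / 2) ^ 2 / τ) = 1 := by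
    rw [← Complex.exp_add, Complex.exp_eq_one_iff]
    refine ⟨0, ?_⟩
    field_simp
    push_cast
    ring
  linear_combination (1 / (-I * τ) ^ (1 / 2 : ℂ) * jacobiTheta₂ (1 / 2) (-1 / τ)) * this

lemma fq_inv (τ : ℂ) (hτ : τ ≠ 0) :
    fq τ = (2 : ℂ) ^ (1 / 2 : ℂ) *
      (jacobiTheta₂ (1 / 2) (-1 / τ) / jacobiTheta₂ (1 / 2) (-1 / (2 * τ))) := by
  have h0 : -I * τ ≠ 0 := by simp [hτ]
  have : (-I * (2 * τ)) ^ (1 / 2 : ℂ) = (2 : ℂ) ^ (1 / 2 : ℂ) * (-I * τ) ^ (1 / 2 : ℂ) := by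
    rw [show -I * (2 * τ) = ((2 : ℝ) : ℂ) * (-I * τ) by push_cast; ring]
    rw [Complex.cpow_def_of_ne_zero (by simp [hτ]), Complex.cpow_def_of_ne_zero two_ne_zero,
      Complex.cpow_def_of_ne_zero h0, Complex.log_ofReal_mul (by norm_num) h0, ← Complex.exp_add,
      Complex.ofReal_log (by norm_num)]
    push_cast
    congr 1
    ring
  have h1 : (-I * τ) ^ (1 / 2 : ℂ) ≠ 0 := by simp [Complex.cpow_eq_zero_iff, hτ]
  have h2 : (2 : ℂ) ^ (1 / 2 : ℂ) ≠ 0 := by simp [Complex.cpow_eq_zero_iff]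
  unfold fq
  rw [th2_inv τ hτ, th2_inv (2 * τ) (by simp [hτ]), this]
  field_simp

lemma j_sub_two (z τ : ℂ) : jacobiTheta₂ z (τ - 2) = jacobiTheta₂ z τ := by
  rw [← jacobiTheta₂_add_right, sub_add_cancel]

lemma fq_U (τ : ℂ) (hτ : τ ≠ 0) (h : 4 * τ + 1 ≠ 0) : fq (τ / (4 * τ + 1)) = fq τ := by
  rw [fq_inv _ (div_ne_zero hτ h), fq_inv _ hτ]
  rw [show -1 / (τ / (4 * τ + 1)) = -1 / τ - 2 - 2 by field_simp; ring,
    show -1 / (2 * (τ / (4 * τ + 1))) = -1 / (2 * τ) - 2 by field_simp; ring]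
  simp only [j_sub_two]

lemma th2_zero {τ : ℂ} (hτ : 0 < τ.im) (h : θ₂ (2 * τ) = 0) : θ₂ τ = 0 := by
  have := th2_sq hτ
  rw [h] at this
  simpa using this

lemma th2_prod {τ : ℂ} (hτ : 0 < τ.im) (m : ℕ) :
    θ₂ τ / θ₂ (2 ^ (m + 1) * τ) = ∏ k ∈ Finset.range (m + 1), fq (2 ^ k * τ) := by
  induction m with
  | zero => simp [fq]
  | succ m ih =>
    rw [Finset.prod_range_succ, ← ih, fq, ← mul_assoc 2, ← pow_succ']
    by_cases h : θ₂ (2 ^ (m + 1) * τ) = 0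
    · suffices θ₂ τ = 0 by simp [this]
      have : ∀ k : ℕ, θ₂ (2 ^ k * τ) = 0 → θ₂ τ = 0 := by
        intro k
        induction k with
        | zero => simp
        | succ k ihk =>
          intro hk
          apply ihk
          apply th2_zero
          · rw [show (2 : ℂ) ^ k = ((2 ^ k : ℝ) : ℂ) by push_cast; rfl, Complex.im_ofReal_mul]
            positivity
          · rwa [← mul_assoc, ← pow_succ']
      exact this _ h
    · exact (div_mul_div_cancel₀ h).symm

lemma fq_add_int (k : ℤ) (τ : ℂ) : fq (τ + k) = cexp (-(Real.pi * I / 4) * k) * fq τ := by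
  induction k with
  | zero => simp
  | succ i ih =>
    push_cast at ih ⊢
    rw [← add_assoc, fq_add_one, ih, ← mul_assoc, ← Complex.exp_add]
    congr 2
    ring
  | pred i ih =>
    have h := fq_add_one (τ + ((-(i : ℤ) - 1 : ℤ) : ℂ))
    rw [show τ + ((-(i : ℤ) - 1 : ℤ) : ℂ) + 1 = τ + ((-(i : ℤ) : ℤ) : ℂ) by push_cast; ring,
      ih] at h
    have h' : fq (τ + ((-(i : ℤ) - 1 : ℤ) : ℂ)) = cexp (Real.pi * I / 4) *
        (cexp (-(Real.pi * I / 4)) * fq (τ + ((-(i : ℤ) - 1 : ℤ) : ℂ))) := by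
      rw [← mul_assoc, ← Complex.exp_add]
      simp
    rw [h', ← h, ← mul_assoc, ← Complex.exp_add]
    congr 2
    push_cast
    ring

lemma lin_ne {τ : ℂ} (hτ : 0 < τ.im) (p q : ℤ) (h : ¬ (p = 0 ∧ q = 0)) :
    (p : ℂ) * τ + q ≠ 0 := by
  intro h0
  apply h
  have h1 : (p : ℝ) * τ.im = 0 := by simpa using congrArg Complex.im h0
  have hp : p = 0 := by
    rcases mul_eq_zero.1 h1 with h | h
    · exact_mod_cast h
    · exact absurd h hτ.ne'
  subst hp
  refine ⟨rfl, ?_⟩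
  simpa using h0

lemma fq_V (τ : ℂ) (hτ : τ ≠ 0) (h : -4 * τ + 1 ≠ 0) : fq (τ / (-4 * τ + 1)) = fq τ := by
  have e : 4 * (τ / (-4 * τ + 1)) + 1 = 1 / (-4 * τ + 1) := by
    rw [mul_div_assoc', div_add_one h]
    congr 1
    ring
  have := fq_U (τ / (-4 * τ + 1)) (div_ne_zero hτ h) (by rw [e]; exact one_div_ne_zero h)
  rw [e] at this
  rw [← this]
  congr 1
  rw [div_div, mul_one_div_cancel h, div_one]

lemma fq_T_step {τ : ℂ} (hτ : 0 < τ.im) (a b c d e : ℤ) (hdet : a * d - b * c = 1)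
    (hc : 4 ∣ c)
    (ih : fq ((((a + e * c : ℤ) : ℂ) * τ + (b + e * d : ℤ)) / ((c : ℂ) * τ + d)) =
      cexp (Real.pi * I * (((d : ℂ) ^ 2 - 1) / 8 - ((b + e * d : ℤ) : ℂ) * d / 4)) * fq τ) :
    fq (((a : ℂ) * τ + b) / ((c : ℂ) * τ + d)) =
      cexp (Real.pi * I * (((d : ℂ) ^ 2 - 1) / 8 - (b : ℂ) * d / 4)) * fq τ := by
  have hd : (c : ℂ) * τ + d ≠ 0 := by
    apply lin_ne hτ
    rintro ⟨rfl, rfl⟩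
    simp at hdet
  obtain ⟨k, hk⟩ : (8 : ℤ) ∣ d ^ 2 - 1 := by
    apply Int.eight_dvd_sq_sub_one_of_odd
    rw [← Int.not_even_iff_odd]
    rintro ⟨s, rfl⟩
    obtain ⟨t, rfl⟩ := hc
    have : 2 * (a * s - 2 * (b * t)) = 1 := by linarith
    omega
  have hk' : (d : ℂ) ^ 2 - 1 = 8 * k := by exact_mod_cast hk
  have e1 : (((a + e * c : ℤ) : ℂ) * τ + (b + e * d : ℤ)) / ((c : ℂ) * τ + d) =
      ((a : ℂ) * τ + b) / ((c : ℂ) * τ + d) + e := by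
    push_cast
    rw [div_add' _ _ _ hd]
    congr 1
    ring
  rw [e1, fq_add_int] at ih
  have h2 := congrArg (fun x => cexp ((Real.pi * I / 4) * e) * x) ih
  simp only [← mul_assoc, ← Complex.exp_add] at h2
  rw [show (Real.pi * I / 4) * e + -(Real.pi * I / 4) * e = 0 by ring, Complex.exp_zero,
    one_mul] at h2
  rw [h2]
  congr 1
  rw [Complex.exp_eq_exp_iff_exists_int]
  refine ⟨-(e * k), ?_⟩
  push_cast
  linear_combination -(Real.pi * I * e / 4) * hk'

lemma fq_U_step {τ : ℂ} (hτ : 0 < τ.im) (a b c d e : ℤ) (he : e = 1 ∨ e = -1)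
    (hdet : a * d - b * c = 1) (hc : 4 ∣ c)
    (ih : fq (((a : ℂ) * τ + b) / (((c + 4 * e * a : ℤ) : ℂ) * τ + (d + 4 * e * b : ℤ))) =
      cexp (Real.pi * I * ((((d + 4 * e * b : ℤ) : ℂ) ^ 2 - 1) / 8
        - (b : ℂ) * (d + 4 * e * b : ℤ) / 4)) * fq τ) :
    fq (((a : ℂ) * τ + b) / ((c : ℂ) * τ + d)) =
      cexp (Real.pi * I * (((d : ℂ) ^ 2 - 1) / 8 - (b : ℂ) * d / 4)) * fq τ := by
  have hd : (c : ℂ) * τ + d ≠ 0 := by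
    apply lin_ne hτ
    rintro ⟨rfl, rfl⟩
    simp at hdet
  have hn : (a : ℂ) * τ + b ≠ 0 := by
    apply lin_ne hτ
    rintro ⟨rfl, rfl⟩
    simp at hdet
  have hd' : ((c + 4 * e * a : ℤ) : ℂ) * τ + (d + 4 * e * b : ℤ) ≠ 0 := by
    apply lin_ne hτ
    rintro ⟨h1, h2⟩
    have : a * (d + 4 * e * b) - b * (c + 4 * e * a) = 1 := by linarith
    rw [h1, h2] at this
    simp at this
  have hodd : Odd d := by
    rw [← Int.not_even_iff_odd]
    rintro ⟨s, rfl⟩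
    obtain ⟨t, rfl⟩ := hc
    have : 2 * (a * s - 2 * (b * t)) = 1 := by linarith
    omega
  obtain ⟨k, hk⟩ : Even (b * (b + e * d)) := by
    have : Odd (e * d) := by
      rcases he with rfl | rfl
      · simpa using hodd
      · simpa using hodd
    rcases Int.even_or_odd b with hb | hb
    · exact hb.mul_right _
    · exact (hb.add_odd this).mul_left _
  have hk' : (b : ℂ) * (b + e * d) = k + k := by exact_mod_cast hk
  set w := ((a : ℂ) * τ + b) / ((c : ℂ) * τ + d) with hw
  have hw0 : w ≠ 0 := div_ne_zero hn hd
  have e0 : 4 * e * w + 1 =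
      (((c + 4 * e * a : ℤ) : ℂ) * τ + (d + 4 * e * b : ℤ)) / ((c : ℂ) * τ + d) := by
    rw [hw]
    push_cast
    rw [mul_div_assoc', div_add_one hd]
    congr 1
    ring
  have e1 : ((a : ℂ) * τ + b) / (((c + 4 * e * a : ℤ) : ℂ) * τ + (d + 4 * e * b : ℤ)) =
      w / (4 * e * w + 1) := by
    rw [e0, hw, div_div_div_cancel_right₀ hd]
  have e2 : 4 * e * w + 1 ≠ 0 := by
    rw [e0]
    exact div_ne_zero hd' hd
  have e3 : fq (w / (4 * e * w + 1)) = fq w := by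
    rcases he with rfl | rfl
    · have := fq_U w hw0 (by simpa using e2)
      simpa using this
    · have := fq_V w hw0 (by simpa using e2)
      simpa using this
  have ee : (e : ℂ) ^ 2 = 1 := by
    rcases he with rfl | rfl <;> simp
  rw [e1, e3] at ih
  rw [ih]
  congr 1
  rw [Complex.exp_eq_exp_iff_exists_int]
  refine ⟨k + (if e = 1 then 0 else b ^ 2), ?_⟩
  rcases he with rfl | rfl
  · push_cast at hk' ⊢
    simp
    linear_combination (Real.pi * I) * hk'
  · push_cast at hk' ⊢
    simp
    linear_combination (Real.pi * I) * hk'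

lemma fq_gamma {τ : ℂ} (hτ : 0 < τ.im) (N : ℕ) : ∀ a b c d : ℤ, a.natAbs + c.natAbs ≤ N →
    a * d - b * c = 1 → 4 ∣ c →
    fq (((a : ℂ) * τ + b) / ((c : ℂ) * τ + d)) =
      cexp (Real.pi * I * (((d : ℂ) ^ 2 - 1) / 8 - (b : ℂ) * d / 4)) * fq τ := by
  induction N with
  | zero =>
    intro a b c d hN hdet hc
    have ha : a = 0 := by omega
    have hc : c = 0 := by omega
    subst ha hc
    simp at hdet
  | succ N IH =>
    intro a b c d hN hdet hc
    have hodd : Odd a := by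
      rw [← Int.not_even_iff_odd]
      rintro ⟨s, rfl⟩
      obtain ⟨t, rfl⟩ := hc
      have : 2 * (s * d - 2 * (b * t)) = 1 := by linarith
      omega
    by_cases h0 : c = 0
    · subst h0
      have had : a * d = 1 := by linarith
      rcases Int.eq_one_or_neg_one_of_mul_eq_one' had with ⟨rfl, rfl⟩ | ⟨rfl, rfl⟩
      · have := fq_add_int b τ
        simp only [Int.cast_one, Int.cast_zero, zero_mul, zero_add, one_mul, div_one]
        rw [this]
        congr 2
        ring
      · have := fq_add_int (-b) τ
        rw [show (((-1 : ℤ) : ℂ) * τ + b) / (((0 : ℤ) : ℂ) * τ + (-1 : ℤ)) = τ + (-b : ℤ) by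
          push_cast; ring]
        rw [this]
        congr 2
        push_cast
        ring
    · obtain ⟨t, ht⟩ := hodd
      obtain ⟨s, hs⟩ := hc
      by_cases h1 : c.natAbs < 2 * a.natAbs
      · obtain ⟨e, he⟩ : ∃ e : ℤ, (a + e * c).natAbs < a.natAbs := by
          by_cases h : (a + c).natAbs < a.natAbs
          · exact ⟨1, by simpa using h⟩
          · exact ⟨-1, by rw [neg_one_mul]; omega⟩
        refine fq_T_step hτ a b c d e hdet ⟨s, hs⟩ ?_
        exact IH _ _ _ _ (by omega) (by linarith) ⟨s, hs⟩
      · obtain ⟨e, he, he'⟩ : ∃ e : ℤ, (e = 1 ∨ e = -1) ∧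
            (c + 4 * e * a).natAbs < c.natAbs := by
          by_cases h : (c + 4 * a).natAbs < c.natAbs
          · exact ⟨1, Or.inl rfl, by simpa using h⟩
          · exact ⟨-1, Or.inr rfl, by omega⟩
        refine fq_U_step hτ a b c d e he hdet ⟨s, hs⟩ ?_
        exact IH _ _ _ _ (by omega) (by linarith) ⟨s + e * a, by rw [hs]; ring⟩

theorem y_odd_transform (n : ℕ) (hn : 5 ≤ n) (hn2 : Odd n)
    (a b c d : ℤ) (hdet : a * d - b * c = 1) (hc : (2 ^ n : ℤ) ∣ c)
    (τ : ℂ) (hτ : 0 < τ.im) :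
    yfun n (((a : ℂ) * τ + b) / ((c : ℂ) * τ + d)) =
      (-1 : ℂ) ^ ((d ^ 2 - 1) / 8 : ℤ) * yfun n τ := by
  obtain ⟨m, rfl⟩ := Nat.exists_eq_add_of_le' hn
  have hm : Odd (m + 1) := by
    rcases hn2 with ⟨t, ht⟩
    exact ⟨t - 2, by omega⟩
  obtain ⟨e, rfl⟩ := hc
  have hd : (((2 ^ (m + 5) * e : ℤ)) : ℂ) * τ + d ≠ 0 := by
    apply lin_ne hτ
    rintro ⟨h1, rfl⟩
    rw [h1] at hdet
    simp at hdet
  obtain ⟨K, hK⟩ : (8 : ℤ) ∣ d ^ 2 - 1 := by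
    apply Int.eight_dvd_sq_sub_one_of_odd
    rw [← Int.not_even_iff_odd]
    rintro ⟨s, rfl⟩
    have : 2 * (a * s - (b * (2 ^ (m + 4) * e))) = 1 := by rw [← hdet]; ring
    omega
  have hK' : (d : ℂ) ^ 2 - 1 = 8 * K := by exact_mod_cast hK
  set w := ((a : ℂ) * τ + b) / (((2 ^ (m + 5) * e : ℤ) : ℂ) * τ + d) with hw
  have hwim : 0 < w.im := by
    have h1 : w.im = τ.im / Complex.normSq (((2 ^ (m + 5) * e : ℤ) : ℂ) * τ + d) := by
      have hdet' : (a : ℝ) * d - b * (2 ^ (m + 5) * e : ℤ) = 1 := by exact_mod_cast hdet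
      generalize (2 ^ (m + 5) * e : ℤ) = c at *
      rw [hw, Complex.div_im]
      have hns : Complex.normSq ((c : ℂ) * τ + d) ≠ 0 := by simpa using hd
      rw [← sub_div]
      congr 1
      simp
      linear_combination τ.im * hdet'
    rw [h1]
    exact div_pos hτ (Complex.normSq_pos.2 hd)
  have key : ∀ σ : ℂ, 0 < σ.im → yfun (m + 5) σ =
      ∏ k ∈ Finset.range (m + 1), fq (2 ^ k * (8 * σ)) := by
    intro σ hσ
    rw [← th2_prod (by simpa using hσ), yfun]
    congr 2
    rw [show m + 5 - 1 = m + 4 by omega]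
    ring
  have hk : ∀ k ∈ Finset.range (m + 1), fq (2 ^ k * (8 * w)) =
      (-1 : ℂ) ^ K * fq (2 ^ k * (8 * τ)) := by
    intro k hk
    obtain ⟨j, rfl⟩ := Nat.exists_eq_add_of_le (Nat.lt_succ_iff.1 (Finset.mem_range.1 hk))
    have him : 0 < (2 ^ k * (8 * τ)).im := by
      rw [show (2 : ℂ) ^ k * (8 * τ) = ((2 ^ k * 8 : ℝ) : ℂ) * τ by push_cast; ring,
        Complex.im_ofReal_mul]
      positivity
    have := fq_gamma him _ a (2 ^ k * 8 * b) (2 ^ j * 4 * e) d le_rfl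
      (by rw [← hdet]; ring) ⟨2 ^ j * e, by ring⟩
    have e1 : ((a : ℂ) * (2 ^ k * (8 * τ)) + (2 ^ k * 8 * b : ℤ)) /
        (((2 ^ j * 4 * e : ℤ) : ℂ) * (2 ^ k * (8 * τ)) + d) = 2 ^ k * (8 * w) := by
      have e2 : ((2 ^ j * 4 * e : ℤ) : ℂ) * (2 ^ k * (8 * τ)) + d =
          ((2 ^ (k + j + 5) * e : ℤ) : ℂ) * τ + d := by
        push_cast
        ring
      rw [e2, hw]
      push_cast
      ring
    rw [e1] at this
    rw [this]
    congr 1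
    rw [← Complex.exp_pi_mul_I, ← Complex.exp_int_mul, Complex.exp_eq_exp_iff_exists_int]
    refine ⟨-(2 ^ k * b * d), ?_⟩
    push_cast
    linear_combination (Real.pi * I / 8) * hK'
  rw [key w hwim, key τ hτ, Finset.prod_congr rfl hk, Finset.prod_mul_distrib]
  congr 1
  rw [Finset.prod_const, Finset.card_range, hK, Int.mul_ediv_cancel_left _ (by norm_num)]
  rcases Int.even_or_odd K with h | h
  · rw [h.neg_one_zpow, one_pow]
  · rw [h.neg_one_zpow, hm.neg_one_pow]
end

section
/- Let n ≥ 6 be an even integer, let k be an integer with 4 ≤ k ≤ n−2, and let σ = (a b; 2^k d) ∈ SL₂(ℤ). Then x_n has neither a zero nor a pole at the cusp a/2^k while y_n vanishes there: there exist nonzero complex numbers ε₁ and ε₂ such that x_n(στ) → ε₁ and y_n(στ)·exp(−2πi·τ) → ε₂ as Im τ → ∞, where στ = (aτ+b)/(2^kτ+d). -/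
open Complex Filter Topology

section

open scoped UpperHalfPlane
open ModularGroup Matrix

namespace MidCusp

noncomputable def th4 (τ : ℂ) : ℂ := jacobiTheta₂ (1/2) τ

lemma th3_eq (τ : ℂ) : θ₃ τ = jacobiTheta₂ 0 τ := by
  unfold θ₃ jacobiTheta₂ jacobiTheta₂_term
  congr 1; ext n; congr 1; ring

lemma th3_eq' (τ : ℂ) : θ₃ τ = jacobiTheta τ := by
  rw [th3_eq, jacobiTheta_eq_jacobiTheta₂]

lemma th2_eq (τ : ℂ) : θ₂ τ = Complex.exp (Real.pi * I * τ / 4) * jacobiTheta₂ (τ/2) τ := by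
  unfold θ₂ jacobiTheta₂ jacobiTheta₂_term
  rw [← tsum_mul_left]
  congr 1; ext n; rw [← Complex.exp_add]; congr 1; ring

lemma th2_T (τ : ℂ) : θ₂ (τ + 1) = Complex.exp (Real.pi * I / 4) * θ₂ τ := by
  unfold θ₂
  rw [← tsum_mul_left]
  congr 1; ext n; rw [← Complex.exp_add, Complex.exp_eq_exp_iff_exists_int]
  obtain ⟨m, hm⟩ := (Int.even_mul_succ_self n)
  refine ⟨m, ?_⟩
  have : (n : ℂ) * (n + 1) = m + m := by exact_mod_cast hm
  linear_combination (Real.pi * I) * this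

lemma th3_T (τ : ℂ) : θ₃ (τ + 1) = th4 τ := by
  unfold θ₃ th4 jacobiTheta₂ jacobiTheta₂_term
  congr 1; ext n; rw [Complex.exp_eq_exp_iff_exists_int]
  obtain ⟨m, hm⟩ := (Int.even_mul_succ_self n)
  refine ⟨m - n, ?_⟩
  have : (n : ℂ) * (n + 1) = m + m := by exact_mod_cast hm
  push_cast
  linear_combination (Real.pi * I) * this

lemma th4_T (τ : ℂ) : th4 (τ + 1) = θ₃ τ := by
  rw [← th3_T, th3_eq, th3_eq, add_assoc, one_add_one_eq_two, jacobiTheta₂_add_right]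

noncomputable def rt (τ : ℂ) : ℂ := (-I * τ) ^ (1 / 2 : ℂ)

lemma rt_sq (τ : ℂ) : rt τ ^ 2 = -I * τ := by
  unfold rt
  rw [← Complex.cpow_nat_mul]; simp

lemma rt_ne (τ : ℍ) : rt τ ≠ 0 := by
  intro h
  have := rt_sq τ
  rw [h] at this
  simp [τ.ne_zero] at this

lemma th3_S (τ : ℍ) : θ₃ (-1 / τ) = rt τ * θ₃ τ := by
  rw [th3_eq, th3_eq, jacobiTheta₂_functional_equation 0 τ]
  have := rt_ne τ
  rw [← rt]
  field_simp
  simp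

lemma th2_S (τ : ℍ) : θ₂ (-1 / τ) = rt τ * th4 τ := by
  rw [th2_eq, th4, jacobiTheta₂_functional_equation (1/2) τ]
  have := rt_ne τ
  have h0 := τ.ne_zero
  rw [← rt, ← jacobiTheta₂_neg_left]
  have e1 : -(-1 / (τ : ℂ) / 2) = 1 / 2 / τ := by ring
  have e2 : Real.pi * I * (-1 / (τ:ℂ)) / 4 = -Real.pi * I * (1 / 2) ^ 2 / τ := by ring
  rw [e1, e2]
  field_simp

lemma th4_S (τ : ℍ) : th4 (-1 / τ) = rt τ * θ₂ τ := by
  rw [th2_eq, th4, jacobiTheta₂_functional_equation (τ/2) τ]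
  have := rt_ne τ
  have h0 := τ.ne_zero
  rw [← rt]
  have e1 : (τ : ℂ) / 2 / τ = 1 / 2 := by field_simp
  have e2 : -Real.pi * I * (τ / 2) ^ 2 / (τ:ℂ) = - (Real.pi * I * τ / 4) := by field_simp; ring
  rw [e1, e2, Complex.exp_neg]
  field_simp [Complex.exp_ne_zero]

noncomputable def Th (p q : ZMod 2) (τ : ℍ) : ℂ :=
  if p = 0 then (if q = 0 then 0 else θ₂ τ) else (if q = 0 then th4 τ else θ₃ τ)

noncomputable def den (g : SpecialLinearGroup (Fin 2) ℤ) (τ : ℍ) : ℂ := (g 1 0 : ℂ) * τ + g 1 1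

lemma den_eq (g : SpecialLinearGroup (Fin 2) ℤ) (τ : ℍ) : den g τ = UpperHalfPlane.denom g τ := by
  simp [den, UpperHalfPlane.denom]

lemma den_ne (g : SpecialLinearGroup (Fin 2) ℤ) (τ : ℍ) : den g τ ≠ 0 := by
  rw [den_eq]; exact UpperHalfPlane.denom_ne_zero _ _

lemma coe_sl (g : SpecialLinearGroup (Fin 2) ℤ) (τ : ℍ) :
    ((g • τ : ℍ) : ℂ) = ((g 0 0 : ℂ) * τ + g 0 1) / ((g 1 0 : ℂ) * τ + g 1 1) := by
  rw [UpperHalfPlane.coe_specialLinearGroup_apply]; simp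

lemma den_mul (g h : SpecialLinearGroup (Fin 2) ℤ) (τ : ℍ) :
    den (g * h) τ = den g (h • τ) * den h τ := by
  have := den_ne h τ
  unfold den at *
  rw [coe_sl]
  simp [Matrix.mul_apply, Fin.sum_univ_two]
  field_simp
  ring

lemma cont_sl (g : SpecialLinearGroup (Fin 2) ℤ) : Continuous (fun τ : ℍ => g • τ) := by
  exact continuous_const_smul (g : GL (Fin 2) ℝ)

def RelT (g : SpecialLinearGroup (Fin 2) ℤ) (f h : ℍ → ℂ) : Prop :=
  ∃ J : ℍ → ℂ, Continuous J ∧ (∃ u : ℂ, u ≠ 0 ∧ ∀ τ, J τ ^ 2 = u * den g τ) ∧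
    ∀ τ : ℍ, f (g • τ) = J τ * h τ

lemma RelT.mul {g g' : SpecialLinearGroup (Fin 2) ℤ} {f h k : ℍ → ℂ}
    (h1 : RelT g f h) (h2 : RelT g' h k) : RelT (g * g') f k := by
  obtain ⟨J, hJ, ⟨u, hu, hJu⟩, H⟩ := h1
  obtain ⟨J', hJ', ⟨u', hu', hJu'⟩, H'⟩ := h2
  refine ⟨fun τ => J (g' • τ) * J' τ, (hJ.comp (cont_sl g')).mul hJ', ⟨u * u', mul_ne_zero hu hu', ?_⟩, ?_⟩
  · intro τ
    rw [mul_pow, hJu, hJu', den_mul]; ring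
  · intro τ
    rw [SemigroupAction.mul_smul, H, H']; ring

lemma RelT.inv {g : SpecialLinearGroup (Fin 2) ℤ} {f h : ℍ → ℂ}
    (h1 : RelT g f h) : RelT g⁻¹ h f := by
  obtain ⟨J, hJ, ⟨u, hu, hJu⟩, H⟩ := h1
  have hne : ∀ τ, J τ ≠ 0 := fun τ h0 => by
    have := hJu τ
    rw [h0] at this
    simp [hu, den_ne] at this
  refine ⟨fun τ => (J (g⁻¹ • τ))⁻¹, (hJ.comp (cont_sl _)).inv₀ (fun _ => hne _),
    ⟨u⁻¹, inv_ne_zero hu, ?_⟩, ?_⟩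
  · intro τ
    have h2 := den_mul g g⁻¹ τ
    rw [mul_inv_cancel] at h2
    have h3 : den 1 τ = 1 := by simp [den]
    rw [h3] at h2
    rw [inv_pow, hJu, mul_inv]
    rw [eq_comm, mul_eq_one_iff_eq_inv₀ (den_ne _ _)] at h2
    rw [h2, inv_inv]
  · intro τ
    have := H (g⁻¹ • τ)
    rw [smul_inv_smul] at this
    rw [this, inv_mul_cancel_left₀ (hne _)]

def QQ (g : SpecialLinearGroup (Fin 2) ℤ) : Prop := ∀ p q : ZMod 2,
  RelT g (Th p q) (Th (p * (g 0 0 : ℤ) + q * (g 1 0 : ℤ)) (p * (g 0 1 : ℤ) + q * (g 1 1 : ℤ)))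

lemma QQ_mul {g g' : SpecialLinearGroup (Fin 2) ℤ} (h : QQ g) (h' : QQ g') : QQ (g * g') := by
  intro p q
  have := (h p q).mul (h' _ _)
  convert this using 2 <;> simp [Matrix.mul_apply, Fin.sum_univ_two] <;> ring

lemma QQ_inv {g : SpecialLinearGroup (Fin 2) ℤ} (h : QQ g) : QQ g⁻¹ := by
  intro p q
  have := (h (p * (g⁻¹ 0 0 : ℤ) + q * (g⁻¹ 1 0 : ℤ)) (p * (g⁻¹ 0 1 : ℤ) + q * (g⁻¹ 1 1 : ℤ))).inv
  have hd := g.det_coe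
  rw [Matrix.det_fin_two] at hd
  have hd' : ((g 0 0 : ℤ) : ZMod 2) * (g 1 1 : ℤ) - (g 0 1 : ℤ) * (g 1 0 : ℤ) = 1 := by
    exact_mod_cast congrArg (Int.cast : ℤ → ZMod 2) hd
  have h2 : (2 : ZMod 2) = 0 := by decide
  convert this using 2
  · simp [SpecialLinearGroup.SL2_inv_expl]
    linear_combination (-p) * hd' + (-(p * (g 1 0 : ℤ) * (g 0 1 : ℤ)) - q * (g 1 0 : ℤ) * (g 0 0 : ℤ)) * h2
  · simp [SpecialLinearGroup.SL2_inv_expl]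
    linear_combination (-q) * hd' + (-(q * (g 1 0 : ℤ) * (g 0 1 : ℤ)) - p * (g 1 1 : ℤ) * (g 0 1 : ℤ)) * h2

lemma QQ_one : QQ 1 := by
  intro p q
  refine ⟨fun _ => 1, continuous_const, ⟨1, one_ne_zero, fun τ => by simp [den]⟩, fun τ => ?_⟩
  simp

lemma cT (τ : ℍ) : ((T • τ : ℍ) : ℂ) = τ + 1 := by
  rw [coe_sl]; simp [T]

lemma cS (τ : ℍ) : ((S • τ : ℍ) : ℂ) = -1 / τ := by
  rw [coe_sl]; simp [S]

lemma zmod2 (p : ZMod 2) : p = 0 ∨ p = 1 := by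
  revert p; decide

lemma QQ_T : QQ T := by
  have key : ∀ f h : ℍ → ℂ, (∃ c : ℂ, c ≠ 0 ∧ c^8=1 ∧ ∀ τ, f (T • τ) = c * h τ) → RelT T f h := by
    rintro f h ⟨c, hc, -, H⟩
    exact ⟨fun _ => c, continuous_const, ⟨c^2, by simp [hc], fun τ => by simp [den, T]⟩, H⟩
  intro p q
  rcases zmod2 p with rfl | rfl <;> rcases zmod2 q with rfl | rfl
  · exact key _ _ ⟨1, by simp, by simp, fun τ => by simp [Th]⟩
  · refine key _ _ ⟨Complex.exp (Real.pi * I / 4), Complex.exp_ne_zero _, ?_, fun τ => ?_⟩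
    · rw [← Complex.exp_nat_mul, ← Complex.exp_two_pi_mul_I]; congr 1; push_cast; ring
    · simp [Th, T, ← th2_T, ← cT]
  · exact key _ _ ⟨1, by simp, by simp, fun τ => by
      simp [Th, T, ← th4_T, ← cT]⟩
  · refine key _ _ ⟨1, by simp, by simp, fun τ => ?_⟩
    have : (1 : ZMod 2) + 1 = 0 := by decide
    simp [Th, T, ← th3_T, ← cT, this]

lemma rt_cont : Continuous (fun τ : ℍ => rt τ) := by
  unfold rt
  refine Continuous.cpow (by fun_prop) continuous_const (fun τ => ?_)
  left
  simpa using τ.im_pos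

lemma QQ_S : QQ S := by
  have key : ∀ f h : ℍ → ℂ, (∀ τ : ℍ, f (S • τ) = rt τ * h τ) → RelT S f h := by
    rintro f h H
    exact ⟨fun τ => rt τ, rt_cont, ⟨-I, by simp, fun τ => by simp [den, S, rt_sq]⟩, H⟩
  intro p q
  have : (-1 : ZMod 2) ≠ 0 := by decide
  rcases zmod2 p with rfl | rfl <;> rcases zmod2 q with rfl | rfl
  · exact key _ _ fun τ => by simp [Th]
  · refine key _ _ fun τ => ?_
    simp [Th, S, ← th2_S, ← cS]
  · refine key _ _ fun τ => ?_
    simp [Th, S, ← th4_S, ← cS]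
  · refine key _ _ fun τ => ?_
    simp [Th, S, ← th3_S, ← cS]

lemma QQ_all (g : SpecialLinearGroup (Fin 2) ℤ) : QQ g := by
  have : g ∈ Subgroup.closure {S, T} := by simp [SpecialLinearGroup.SL2Z_generators]
  induction this using Subgroup.closure_induction with
  | mem x hx =>
    rcases hx with rfl | rfl
    · exact QQ_S
    · exact QQ_T
  | one => exact QQ_one
  | mul _ _ _ _ h h' => exact QQ_mul h h'
  | inv _ _ h => exact QQ_inv h

lemma const_ratio {J J' g : ℍ → ℂ} (hJ : Continuous J) (hJ' : Continuous J')
    {u u' : ℂ} (hu : u ≠ 0) (hu' : u' ≠ 0) (hg : ∀ τ, g τ ≠ 0)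
    (h : ∀ τ, J τ ^ 2 = u * g τ) (h' : ∀ τ, J' τ ^ 2 = u' * g τ) :
    ∃ e : ℂ, e ≠ 0 ∧ ∀ τ, J τ = e * J' τ := by
  obtain ⟨c, hc⟩ := IsAlgClosed.exists_pow_nat_eq (u / u') (n := 2) (by norm_num)
  have hc0 : c ≠ 0 := by
    rintro rfl
    have : u / u' ≠ 0 := div_ne_zero hu hu'
    exact this (by rw [← hc]; simp)
  have hne : ∀ τ, c * J' τ ≠ 0 := fun τ h0 => by
    have h1 : J' τ = 0 := by simpa [hc0] using h0
    have := h' τ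
    rw [h1] at this
    simp [hu', hg] at this
  have := (isPreconnected_univ (α := ℍ)).eq_or_eq_neg_of_sq_eq (f := J) (g := fun τ => c * J' τ)
    hJ.continuousOn (by fun_prop) (fun τ _ => by
      simp only [Pi.pow_apply, mul_pow, h, h', hc]; field_simp) (fun {τ} _ => hne τ)
  rcases this with h1 | h1
  · exact ⟨c, hc0, fun τ => h1 (Set.mem_univ τ)⟩
  · exact ⟨-c, by simpa, fun τ => by simpa using h1 (Set.mem_univ τ)⟩

lemma th3_lim : Tendsto θ₃ (comap Complex.im atTop) (𝓝 1) := by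
  have h1 := isBigO_at_im_infty_jacobiTheta_sub_one
  have h2 : Tendsto (fun τ : ℂ => Real.exp (-Real.pi * τ.im)) (comap Complex.im atTop) (𝓝 0) := by
    refine Real.tendsto_exp_atBot.comp ?_
    exact (tendsto_id.const_mul_atTop_of_neg (by simpa using Real.pi_pos)).comp tendsto_comap
  have h3 := (h1.trans_tendsto h2).add_const 1
  simp at h3
  exact h3.congr fun τ => (th3_eq' τ).symm

lemma th4_lim : Tendsto th4 (comap Complex.im atTop) (𝓝 1) := by
  have : Tendsto (fun τ : ℂ => τ + 1) (comap Complex.im atTop) (comap Complex.im atTop) := by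
    rw [tendsto_comap_iff]
    exact tendsto_comap.congr fun τ => by simp
  exact (th3_lim.comp this).congr fun τ => th3_T τ

lemma th2_lim : Tendsto (fun τ => θ₂ τ * Complex.exp (-(Real.pi * I * τ / 4))) (comap Complex.im atTop) (𝓝 2) := by
  have e : ∀ τ, θ₂ τ * Complex.exp (-(Real.pi * I * τ / 4)) = ∑' n : ℤ, jacobiTheta₂_term n (τ/2) τ := by
    intro τ
    rw [th2_eq, Complex.exp_neg, jacobiTheta₂]
    field_simp [Complex.exp_ne_zero]
  simp_rw [e]
  have e2 : (2 : ℂ) = ∑' n : ℤ, if n ∈ ({0, -1} : Finset ℤ) then 1 else 0 := by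
    rw [tsum_eq_sum (s := ({0, -1} : Finset ℤ)) (fun n hn => by simp [hn])]
    rw [Finset.sum_ite_mem]; simp
  rw [show 𝓝 (2 : ℂ) = _ from congrArg 𝓝 e2]
  have nrm : ∀ (n : ℤ) (τ : ℂ), ‖jacobiTheta₂_term n (τ/2) τ‖ = Real.exp (-Real.pi * ((n * (n+1) : ℤ) : ℝ) * τ.im) := by
    intro n τ
    rw [norm_jacobiTheta₂_term]
    congr 1
    have : (τ / 2).im = τ.im / 2 := by simp
    rw [this]; push_cast; ring
  have hpos : ∀ n : ℤ, 0 ≤ n * (n + 1) := fun n => by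
    rcases le_or_gt 0 n with h | h
    · positivity
    · nlinarith
  refine tendsto_tsum_of_dominated_convergence (bound := fun n : ℤ => ‖jacobiTheta₂_term n (I/2) I‖)
    ?_ ?_ ?_
  · exact ((summable_jacobiTheta₂_term_iff (I/2) I).2 (by simp)).norm
  · intro n
    by_cases hn : n ∈ ({0, -1} : Finset ℤ)
    · simp only [hn, if_true]
      refine tendsto_const_nhds.congr fun τ => ?_
      simp at hn
      rcases hn with rfl | rfl
      · simp [jacobiTheta₂_term]
      · simp only [jacobiTheta₂_term]
        rw [eq_comm, Complex.exp_eq_one_iff]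
        exact ⟨0, by push_cast; ring⟩
    · simp only [hn, if_false]
      rw [tendsto_zero_iff_norm_tendsto_zero]
      simp_rw [nrm]
      refine Real.tendsto_exp_atBot.comp ?_
      have : 0 < n * (n+1) := by
        refine lt_of_le_of_ne (hpos n) (fun h => hn ?_)
        rcases mul_eq_zero.1 h.symm with h | h
        · simp [h]
        · simp; omega
      have h' : (0:ℝ) < ((n * (n+1) : ℤ) : ℝ) := by exact_mod_cast this
      exact (tendsto_id.const_mul_atTop_of_neg (by nlinarith [Real.pi_pos])).comp tendsto_comap
  · have : ∀ᶠ τ : ℂ in comap Complex.im atTop, 1 ≤ τ.im := tendsto_comap.eventually (eventually_ge_atTop 1)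
    filter_upwards [this] with τ hτ n
    rw [nrm, nrm]
    apply Real.exp_le_exp.2
    have h' : (0:ℝ) ≤ ((n * (n+1) : ℤ) : ℝ) := by exact_mod_cast hpos n
    have := mul_nonneg Real.pi_pos.le h'
    simp only [I_im]
    nlinarith

lemma continuous_coe_iff {f : ℍ → ℍ} (h : Continuous fun τ => (f τ : ℂ)) : Continuous f :=
  UpperHalfPlane.isEmbedding_coe.continuous_iff.2 h

lemma main (m j : ℕ) (hm : 1 ≤ m) (hj : 1 ≤ j) (a b d : ℤ) (hdet : a * d - 2 ^ (j + 3) * b = 1) :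
    ∃ ε₁ ε₂ : ℂ, ε₁ ≠ 0 ∧ ε₂ ≠ 0 ∧ ∀ τ : ℍ, ∃ J : ℂ, J ≠ 0 ∧
      θ₂ (2 ^ m * a - 1 / (((2 ^ (j + 3) : ℂ) * τ + d) / 2 ^ m)) =
        J * th4 (((2 ^ (j + 3) : ℂ) * τ + d) / 2 ^ m) ∧
      θ₃ (2 ^ m * a - 1 / (((2 ^ (j + 3) : ℂ) * τ + d) / 2 ^ m)) =
        ε₁ * J * θ₃ (((2 ^ (j + 3) : ℂ) * τ + d) / 2 ^ m) ∧
      θ₂ (((a : ℂ) * (8 * τ) + (8 * b)) / ((2 ^ j : ℂ) * (8 * τ) + d)) = ε₂ * J * θ₂ (8 * τ) := by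
  let g1 : SpecialLinearGroup (Fin 2) ℤ := ⟨!![2 ^ m * a, -1; 1, 0], by simp [Matrix.det_fin_two_of]⟩
  let g2 : SpecialLinearGroup (Fin 2) ℤ := ⟨!![a, 8 * b; 2 ^ j, d], by
    rw [Matrix.det_fin_two_of]; rw [← hdet]; ring⟩
  have h2 : (2 : ZMod 2) = 0 := by decide
  have hm0 : (2 : ZMod 2) ^ m = 0 := by rw [h2, zero_pow (by omega)]
  have hj0 : (2 : ZMod 2) ^ j = 0 := by rw [h2, zero_pow (by omega)]
  have hd1 : ((d : ℤ) : ZMod 2) = 1 := by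
    rcases zmod2 (d : ZMod 2) with h | h
    · have := congrArg (Int.cast : ℤ → ZMod 2) hdet
      push_cast at this
      rw [h, pow_add, hj0] at this
      simp at this
    · exact h
  have neg1 : (-1 : ZMod 2) = 1 := by decide
  have pm : (0:ℝ) < 2 ^ m := by positivity
  let w : ℍ → ℂ := fun τ => (2 ^ (j + 3) : ℂ) * τ + d
  have him : ∀ τ : ℍ, (w τ).im = 2 ^ (j + 3) * τ.im := by
    intro τ
    have : w τ = ((2 ^ (j + 3) : ℝ) : ℂ) * τ + ((d : ℝ) : ℂ) := by simp [w]
    rw [this, Complex.add_im, Complex.im_ofReal_mul, Complex.ofReal_im]; simp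
  have him1 : ∀ τ : ℍ, 0 < (w τ / 2 ^ m).im := by
    intro τ
    have : w τ / 2 ^ m = w τ / ((2 ^ m : ℝ) : ℂ) := by simp
    rw [this, Complex.div_ofReal_im, him]
    have := τ.im_pos
    positivity
  let t1 : ℍ → ℍ := fun τ => ⟨w τ / 2 ^ m, him1 τ⟩
  let t8 : ℍ → ℍ := fun τ => ⟨8 * τ, by have := τ.im_pos; simp; exact this⟩
  have c1 : Continuous t1 := continuous_coe_iff (by simp only [t1, w]; fun_prop)
  have c8 : Continuous t8 := continuous_coe_iff (by simp only [t8]; fun_prop)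
  have wne : ∀ τ, w τ ≠ 0 := fun τ h => by
    have := him τ
    rw [h] at this
    have h2 := τ.im_pos
    have : (0:ℝ) < 2 ^ (j+3) * τ.im := by positivity
    simp_all
  obtain ⟨J2, hc2, ⟨u2, hu2, hJ2⟩, H2⟩ := QQ_all g1 0 1
  obtain ⟨J3, hc3, ⟨u3, hu3, hJ3⟩, H3⟩ := QQ_all g1 1 1
  obtain ⟨J8, hc8, ⟨u8, hu8, hJ8⟩, H8⟩ := QQ_all g2 0 1
  have p0 : (2 ^ m : ℂ) ≠ 0 := pow_ne_zero _ two_ne_zero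
  have d1 : ∀ τ, den g1 (t1 τ) = w τ / 2 ^ m := by
    intro τ; simp [den, g1, t1]
  have d8 : ∀ τ, den g2 (t8 τ) = w τ := by
    intro τ; simp [den, g2, t8, w]; ring
  have k2 : ∀ τ, J2 (t1 τ) ^ 2 = (u2 / 2 ^ m) * w τ := fun τ => by rw [hJ2, d1]; ring
  have k3 : ∀ τ, J3 (t1 τ) ^ 2 = (u3 / 2 ^ m) * w τ := fun τ => by rw [hJ3, d1]; ring
  have k8 : ∀ τ, J8 (t8 τ) ^ 2 = u8 * w τ := fun τ => by rw [hJ8, d8]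
  obtain ⟨e1, he1, E1⟩ := const_ratio (hc3.comp c1) (hc2.comp c1) (div_ne_zero hu3 p0)
    (div_ne_zero hu2 p0) wne k3 k2
  obtain ⟨e2, he2, E2⟩ := const_ratio (hc8.comp c8) (hc2.comp c1) hu8
    (div_ne_zero hu2 p0) wne k8 k2
  refine ⟨e1, e2, he1, he2, fun τ => ⟨J2 (t1 τ), ?_, ?_, ?_, ?_⟩⟩
  · intro h
    have := k2 τ
    rw [h] at this
    simp [hu2, wne] at this
  · have := H2 (t1 τ)
    have hw := wne τ
    have e : ((g1 • t1 τ : ℍ) : ℂ) = 2 ^ m * a - 1 / (w τ / 2 ^ m) := by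
      rw [coe_sl]; simp [g1, t1]; field_simp; ring
    simp only [Th, e] at this
    simpa [g1, t1, w] using this
  · have := H3 (t1 τ)
    have hw := wne τ
    have e : ((g1 • t1 τ : ℍ) : ℂ) = 2 ^ m * a - 1 / (w τ / 2 ^ m) := by
      rw [coe_sl]; simp [g1, t1]; field_simp; ring
    have E1' : J3 (t1 τ) = e1 * J2 (t1 τ) := E1 τ
    simp only [Th, e, E1'] at this
    simpa [g1, t1, w, hm0, neg1] using this
  · have := H8 (t8 τ)
    have e : ((g2 • t8 τ : ℍ) : ℂ) = (a * (8 * τ) + (8 * b)) / (2 ^ j * (8 * τ) + d) := by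
      rw [coe_sl]; simp [g2, t8]
    have E2' : J8 (t8 τ) = e2 * J2 (t1 τ) := E2 τ
    simp only [Th, e, E2'] at this
    simpa [g2, t8, hj0, hd1] using this

end MidCusp

end

theorem behavior_at_middle_cusps (n : ℕ) (hn : 6 ≤ n) (hn2 : Even n)
    (k : ℕ) (hk : 4 ≤ k) (hk2 : k ≤ n - 2)
    (a b d : ℤ) (hdet : a * d - 2 ^ k * b = 1) :
    ∃ ε₁ ε₂ : ℂ, ε₁ ≠ 0 ∧ ε₂ ≠ 0 ∧
      Tendsto (fun τ : ℂ =>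
          xfun n (((a : ℂ) * τ + b) / ((2 ^ k : ℂ) * τ + d)))
        (comap Complex.im atTop) (𝓝 ε₁) ∧
      Tendsto (fun τ : ℂ =>
          yfun n (((a : ℂ) * τ + b) / ((2 ^ k : ℂ) * τ + d)) *
            Complex.exp (-(2 * Real.pi * Complex.I * τ)))
        (comap Complex.im atTop) (𝓝 ε₂) := by 
  obtain ⟨j, rfl⟩ : ∃ j, k = j + 3 := ⟨k - 3, by omega⟩
  obtain ⟨m, rfl⟩ : ∃ m, n = m + (j + 3) + 1 := ⟨n - 1 - (j + 3), by omega⟩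
  obtain ⟨e1, e2, he1, he2, H⟩ := MidCusp.main m j (by omega) (by omega) a b d hdet
  refine ⟨2 * e1, 2 * e2, by simpa, by simpa, ?_, ?_⟩
  all_goals
    have hpos : ∀ᶠ τ : ℂ in comap Complex.im atTop, 0 < τ.im :=
      tendsto_comap.eventually (eventually_gt_atTop 0)
    have hne : ∀ τ : ℂ, 0 < τ.im → (2 ^ (j + 3) : ℂ) * τ + d ≠ 0 := by
      intro τ hτ h
      have h1 : ((2 ^ (j + 3) : ℝ) : ℂ) * τ + ((d : ℝ) : ℂ) = 0 := by simpa using h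
      have h2 := congrArg Complex.im h1
      rw [Complex.add_im, Complex.im_ofReal_mul, Complex.ofReal_im] at h2
      have : (0:ℝ) < 2 ^ (j+3) * τ.im := by positivity
      simp at h2
      simp [h2] at hτ
    have hw : Tendsto (fun τ : ℂ => ((2 ^ (j + 3) : ℂ) * τ + d) / 2 ^ m)
        (comap Complex.im atTop) (comap Complex.im atTop) := by
      rw [tendsto_comap_iff]
      have : Tendsto (fun τ : ℂ => (2 ^ (j + 3) / 2 ^ m : ℝ) * τ.im) (comap Complex.im atTop) atTop :=
        (tendsto_id.const_mul_atTop (by positivity)).comp tendsto_comap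
      refine this.congr fun τ => ?_
      have : ((2 ^ (j + 3) : ℂ) * τ + d) / 2 ^ m
          = (((2 ^ (j + 3) : ℝ) : ℂ) * τ + ((d : ℝ) : ℂ)) / ((2 ^ m : ℝ) : ℂ) := by simp
      simp only [Function.comp]
      rw [this, Complex.div_ofReal_im, Complex.add_im, Complex.im_ofReal_mul, Complex.ofReal_im]
      ring
    have h4 := MidCusp.th4_lim.comp hw
    have h3 := MidCusp.th3_lim.comp hw
    have arg : ∀ τ : ℂ, 0 < τ.im → (2 ^ (m + (j + 3) + 1 - 1) : ℂ) *
        (((a : ℂ) * τ + b) / ((2 ^ (j + 3) : ℂ) * τ + d))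
        = 2 ^ m * a - 1 / (((2 ^ (j + 3) : ℂ) * τ + d) / 2 ^ m) := by
      intro τ hτ
      have h0 := hne τ hτ
      have hd : (a : ℂ) * d - 2 ^ (j + 3) * b = 1 := by exact_mod_cast hdet
      rw [Nat.add_sub_cancel, pow_add 2 m (j + 3)]
      field_simp
      linear_combination -hd
  · have L : Tendsto (fun τ : ℂ => 2 * e1 * (θ₃ (((2 ^ (j + 3) : ℂ) * τ + d) / 2 ^ m) /
        MidCusp.th4 (((2 ^ (j + 3) : ℂ) * τ + d) / 2 ^ m))) (comap Complex.im atTop)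
        (𝓝 (2 * e1 * (1 / 1))) := (h3.div h4 one_ne_zero).const_mul _
    rw [div_one, mul_one] at L
    refine L.congr' ?_
    filter_upwards [hpos] with τ hτ
    obtain ⟨J, hJ, H2, H3, -⟩ := H ⟨τ, hτ⟩
    simp only at H2 H3
    rw [xfun, arg τ hτ, H2, H3]
    field_simp
  · have h8' : Tendsto (fun τ : ℂ => 8 * τ) (comap Complex.im atTop) (comap Complex.im atTop) := by
      rw [tendsto_comap_iff]
      have : Tendsto (fun τ : ℂ => (8 : ℝ) * τ.im) (comap Complex.im atTop) atTop :=
        (tendsto_id.const_mul_atTop (by positivity)).comp tendsto_comap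
      exact this.congr fun τ => by simp
    have h2 := MidCusp.th2_lim.comp h8'
    have L := ((h2.div h4 one_ne_zero).const_mul e2)
    rw [div_one, mul_comm e2] at L
    refine L.congr' ?_
    filter_upwards [hpos] with τ hτ
    obtain ⟨J, hJ, H2, -, H8⟩ := H ⟨τ, hτ⟩
    simp only at H2 H8
    have arg8 : (8 : ℂ) * (((a : ℂ) * τ + b) / ((2 ^ (j + 3) : ℂ) * τ + d))
        = ((a : ℂ) * (8 * τ) + (8 * b)) / ((2 ^ j : ℂ) * (8 * τ) + d) := by
      rw [pow_add, mul_div_assoc']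
      congr 1 <;> ring
    rw [yfun, arg τ hτ, arg8, H2, H8]
    have ex : -(Real.pi * I * (8 * τ) / 4) = -(2 * Real.pi * I * τ) := by ring
    simp only [Pi.div_apply, Function.comp, ex]
    field_simp
end

section
/- For every τ in the complex upper half-plane ℍ, the three eta products x(τ) = η(4τ)²η(8τ)², y(τ) = 2η(8τ)²η(16τ)², z(τ) = η(8τ)⁸/(η(4τ)²η(16τ)²) satisfy the Fermat quartic relation x(τ)⁴ + y(τ)⁴ = z(τ)⁴ (a defining equation of X₀(64)). -/
open Complex

/-- Dedekind eta function η(τ) = exp(πiτ/12)·∏_{n≥1}(1 − exp(2πinτ)). -/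
noncomputable def η (τ : ℂ) : ℂ :=
  Complex.exp (Real.pi * Complex.I * τ / 12) *
    ∏' n : ℕ, (1 - Complex.exp (2 * Real.pi * Complex.I * ((n : ℂ) + 1) * τ))

open Filter Topology

/-- finite Euler product -/
noncomputable def pe (Q : ℂ) (k : ℕ) : ℂ := ∏ j ∈ Finset.range k, (1 - Q ^ (j + 1))

/-- infinite Euler product -/
noncomputable def pE (Q : ℂ) : ℂ := ∏' j : ℕ, (1 - Q ^ (j + 1))

/-- inverse of the finite Euler product, extended by zero to negative integers -/
noncomputable def pw (Q : ℂ) (k : ℤ) : ℂ := if k < 0 then 0 else (pe Q k.toNat)⁻¹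

/-- term of the theta series -/
noncomputable def tht (q z : ℂ) (m : ℤ) : ℂ := z ^ m * q ^ (m ^ 2)

lemma one_sub_pow_ne {Q : ℂ} (hQ : ‖Q‖ < 1) (j : ℕ) : 1 - Q ^ (j + 1) ≠ 0 := by
  intro h
  have h1 : Q ^ (j + 1) = 1 := (sub_eq_zero.mp h).symm
  have h2 : ‖Q‖ ^ (j + 1) = 1 := by rw [← norm_pow, h1, norm_one]
  have h3 : ‖Q‖ ^ (j + 1) < 1 := pow_lt_one₀ (norm_nonneg _) hQ (by omega)
  linarith

lemma pe_ne {Q : ℂ} (hQ : ‖Q‖ < 1) (k : ℕ) : pe Q k ≠ 0 :=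
  Finset.prod_ne_zero_iff.mpr fun j _ => one_sub_pow_ne hQ j

lemma pe_succ (Q : ℂ) (k : ℕ) : pe Q (k + 1) = pe Q k * (1 - Q ^ (k + 1)) :=
  Finset.prod_range_succ _ _

lemma pE_ne {Q : ℂ} (hQ : ‖Q‖ < 1) : pE Q ≠ 0 := by
  have := tprod_one_add_ne_zero_of_summable (f := fun n : ℕ ↦ -Q ^ (n + 1)) ?_ ?_
  · simpa [pE, sub_eq_add_neg] using this
  · intro i; simpa [sub_eq_add_neg] using one_sub_pow_ne hQ i
  · simpa using (summable_nat_add_iff 1).mpr (summable_geometric_of_lt_one (norm_nonneg _) hQ)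

lemma pe_tendsto {Q : ℂ} (hQ : ‖Q‖ < 1) : Tendsto (pe Q) atTop (𝓝 (pE Q)) :=
  (ModularForm.multipliable_one_sub_pow hQ).hasProd.tendsto_prod_nat

lemma pw_rec {Q : ℂ} (hQ : ‖Q‖ < 1) (k : ℤ) : pw Q (k - 1) = (1 - Q ^ k) * pw Q k := by
  rcases lt_trichotomy k 0 with h | h | h
  · simp [pw, h, show k < 1 by omega]
  · subst h; simp [pw]
  · obtain ⟨n, rfl⟩ : ∃ n : ℕ, k = n + 1 := ⟨(k - 1).toNat, by omega⟩
    have h1 : ((n : ℤ) + 1).toNat = n + 1 := by omega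
    have h2 := pe_ne hQ n
    have h3 := one_sub_pow_ne hQ n
    have h4 : ¬ ((n : ℤ) + 1 < 0) := by omega
    have h5 : Q ^ ((n : ℤ) + 1) = Q ^ (n + 1) := by exact_mod_cast zpow_natCast Q (n + 1)
    have h6 : ¬ ((n : ℤ) < 0) := by omega
    simp only [pw, h1, h4, h6, if_false, pe_succ, add_sub_cancel_right, h5, Int.toNat_natCast]
    field_simp

lemma pw_tendsto {Q : ℂ} (hQ : ‖Q‖ < 1) (m : ℤ) :
    Tendsto (fun n : ℕ => pw Q (n + m)) atTop (𝓝 (pE Q)⁻¹) := by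
  have h1 : Tendsto (fun n : ℕ => ((n : ℤ) + m).toNat) atTop atTop := by
    refine tendsto_atTop.mpr fun b => ?_
    filter_upwards [eventually_ge_atTop (b + m.natAbs)] with n hn
    omega
  refine (((pe_tendsto hQ).comp h1).inv₀ (pE_ne hQ)).congr' ?_
  filter_upwards [eventually_ge_atTop m.natAbs] with n hn
  have : ¬ ((n : ℤ) + m < 0) := by omega
  simp [pw, this]

lemma pw_bound {Q : ℂ} (hQ : ‖Q‖ < 1) : ∃ C : ℝ, 0 ≤ C ∧ ∀ k, ‖pw Q k‖ ≤ C := by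
  have h := ((pe_tendsto hQ).inv₀ (pE_ne hQ)).norm.bddAbove_range
  obtain ⟨C, hC⟩ := h
  have hCn : ∀ n, ‖(pe Q n)⁻¹‖ ≤ C := fun n => hC ⟨n, rfl⟩
  have h0 : 0 ≤ C := (norm_nonneg _).trans (hCn 0)
  refine ⟨C, h0, fun k => ?_⟩
  unfold pw
  split_ifs
  · simpa using h0
  · exact hCn _

lemma pe_bound {Q : ℂ} (hQ : ‖Q‖ < 1) : ∃ C : ℝ, 0 ≤ C ∧ ∀ k, ‖pe Q k‖ ≤ C := by
  obtain ⟨C, hC⟩ := (pe_tendsto hQ).norm.bddAbove_range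
  have hCn : ∀ n, ‖pe Q n‖ ≤ C := fun n => hC ⟨n, rfl⟩
  exact ⟨C, (norm_nonneg _).trans (hCn 0), hCn⟩

/-- finite Jacobi triple product -/
lemma finite_jtp {q z : ℂ} (hq : ‖q‖ < 1) (hq0 : q ≠ 0) (hz : z ≠ 0) (n : ℕ) :
    HasSum (fun m : ℤ => pe (q ^ 2) (2 * n) * pw (q ^ 2) (n + -m) * pw (q ^ 2) (n + m) * tht q z m)
      (∏ k ∈ Finset.range n, ((1 + z * q ^ (2 * k + 1)) * (1 + z⁻¹ * q ^ (2 * k + 1)))) := by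
  have hQ : ‖q ^ 2‖ < 1 := by rw [norm_pow]; exact pow_lt_one₀ (norm_nonneg _) hq (by norm_num)
  induction n with
  | zero =>
    have := hasSum_single (f := fun m : ℤ => pe (q ^ 2) (2 * 0) * pw (q ^ 2) ((0 : ℕ) + -m) *
      pw (q ^ 2) ((0 : ℕ) + m) * tht q z m) 0 ?_
    · simpa [pe, pw, tht] using this
    · intro m hm
      rcases lt_or_gt_of_ne hm with h | h
      · simp [pw, h]
      · simp [pw, h]
  | succ n ih =>
    rw [Finset.prod_range_succ]
    have s1 := (Equiv.addRight (1 : ℤ)).hasSum_iff.mpr ih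
    have s2 := (Equiv.addRight (-1 : ℤ)).hasSum_iff.mpr ih
    have key := (ih.mul_right (1 + (q ^ (2 * n + 1)) ^ 2)).add
      ((s2.mul_right (z * q ^ (2 * n + 1))).add (s1.mul_right (z⁻¹ * q ^ (2 * n + 1))))
    convert! key using 1
    · funext m
      simp only [Function.comp, Equiv.coe_addRight]
      set W := pw (q ^ 2) (((n + 1 : ℕ) : ℤ) + -m) with hW
      set V := pw (q ^ 2) (((n + 1 : ℕ) : ℤ) + m) with hV
      have e1 : pw (q ^ 2) ((n : ℤ) + -m) = (1 - (q ^ 2) ^ ((n : ℤ) + 1 - m)) * W := by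
        rw [hW, show ((n + 1 : ℕ) : ℤ) + -m = (n : ℤ) + 1 - m by push_cast; ring, ← pw_rec hQ]
        congr 1; ring
      have e2 : pw (q ^ 2) ((n : ℤ) + m) = (1 - (q ^ 2) ^ ((n : ℤ) + 1 + m)) * V := by
        rw [hV, show ((n + 1 : ℕ) : ℤ) + m = (n : ℤ) + 1 + m by push_cast; ring, ← pw_rec hQ]
        congr 1; ring
      have e3 : pw (q ^ 2) ((n : ℤ) + -(m + 1)) =
          (1 - (q ^ 2) ^ ((n : ℤ) - m)) * ((1 - (q ^ 2) ^ ((n : ℤ) + 1 - m)) * W) := by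
        rw [← e1, show (n : ℤ) + -m = n - m by ring, ← pw_rec hQ]
        congr 1; ring
      have e4 : pw (q ^ 2) ((n : ℤ) + (m + -1)) =
          (1 - (q ^ 2) ^ ((n : ℤ) + m)) * ((1 - (q ^ 2) ^ ((n : ℤ) + 1 + m)) * V) := by
        rw [← e2, ← pw_rec hQ]
        congr 1; ring
      have e5 : pw (q ^ 2) ((n : ℤ) + (m + 1)) = V := by
        rw [hV]; congr 1; push_cast; ring
      have e6 : pw (q ^ 2) ((n : ℤ) + -(m + -1)) = W := by
        rw [hW]; congr 1; push_cast; ring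
      rw [e1, e2, e3, e4, e5, e6, show 2 * (n + 1) = 2 * n + 1 + 1 by ring, pe_succ, pe_succ]
      have hQ0 : q ^ 2 ≠ 0 := pow_ne_zero _ hq0
      have t1 : tht q z (m + 1) = tht q z m * z * q * (q ^ 2) ^ m := by
        simp only [tht]
        rw [show (m + 1) ^ 2 = m ^ 2 + 1 + 2 * m by ring, zpow_add₀ hz, zpow_add₀ hq0,
          zpow_add₀ hq0, zpow_mul]
        simp; ring
      have t2 : tht q z (m + -1) = tht q z m * z⁻¹ * q * ((q ^ 2) ^ m)⁻¹ := by
        simp only [tht]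
        rw [show (m + -1) ^ 2 = m ^ 2 + 1 + 2 * (-m) by ring, zpow_add₀ hz, zpow_add₀ hq0,
          zpow_add₀ hq0, zpow_mul]
        simp; ring
      rw [t1, t2]
      simp only [zpow_add₀ hQ0, zpow_sub₀ hQ0, zpow_one, zpow_natCast]
      have hb : (q ^ 2) ^ m ≠ 0 := zpow_ne_zero _ hQ0
      generalize (q ^ 2) ^ m = b at hb ⊢
      generalize tht q z m = t
      generalize pe (q ^ 2) (2 * n) = e
      field_simp
      ring
    · generalize ∏ k ∈ Finset.range n, (1 + z * q ^ (2 * k + 1)) * (1 + z⁻¹ * q ^ (2 * k + 1)) = P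
      field_simp
      ring
lemma summable_tht {q z : ℂ} (hq : ‖q‖ < 1) (hq0 : q ≠ 0) (hz : z ≠ 0) :
    Summable (tht q z) := by
  have hpi : (Real.pi : ℂ) ≠ 0 := by exact_mod_cast Real.pi_ne_zero
  have h := (summable_jacobiTheta₂_term_iff (log z / (2 * Real.pi * I))
    (log q / (Real.pi * I))).mpr ?_
  · convert! h using 1
    funext m
    rw [jacobiTheta₂_term, Complex.exp_add, tht]
    congr 1
    · rw [show 2 * (Real.pi : ℂ) * I * m * (log z / (2 * Real.pi * I)) = m * log z by
        field_simp, Complex.exp_int_mul, Complex.exp_log hz]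
    · rw [show (Real.pi : ℂ) * I * m ^ 2 * (log q / (Real.pi * I)) = ((m ^ 2 : ℤ) : ℂ) * log q by
        push_cast; field_simp, Complex.exp_int_mul, Complex.exp_log hq0]
  · have : log q / (Real.pi * I) = ((Real.pi⁻¹ : ℝ) : ℂ) * (-I * log q) := by
      push_cast; field_simp; simp
    rw [this, Complex.im_ofReal_mul]
    have h2 : (-I * log q).im = - Real.log ‖q‖ := by simp [Complex.log_re]
    rw [h2]
    have := Real.log_neg (norm_pos_iff.mpr hq0) hq
    have := Real.pi_pos
    apply mul_pos (by positivity) (by linarith)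

lemma mult_one_add {q : ℂ} (hq : ‖q‖ < 1) (c : ℂ) (a b : ℕ) (ha : 0 < a) :
    Multipliable fun k : ℕ => 1 + c * q ^ (a * k + b) := by
  apply multipliable_one_add_of_summable (f := fun k : ℕ => c * q ^ (a * k + b))
  have : Summable fun k : ℕ => (‖c‖ * ‖q‖ ^ b) * (‖q‖ ^ a) ^ k :=
    (summable_geometric_of_lt_one (by positivity) (pow_lt_one₀ (norm_nonneg _) hq ha.ne')).mul_left _
  refine this.congr fun k => ?_
  simp only [norm_mul, norm_pow, pow_add, pow_mul]
  ring

lemma norm_sq_lt {q : ℂ} (hq : ‖q‖ < 1) : ‖q ^ 2‖ < 1 := by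
  rw [norm_pow]; exact pow_lt_one₀ (norm_nonneg _) hq (by norm_num)

/-- Jacobi triple product -/
lemma jtp {q z : ℂ} (hq : ‖q‖ < 1) (hq0 : q ≠ 0) (hz : z ≠ 0) :
    ∑' m, tht q z m = pE (q ^ 2) * ((∏' k : ℕ, (1 + z * q ^ (2 * k + 1))) *
      ∏' k : ℕ, (1 + z⁻¹ * q ^ (2 * k + 1))) := by
  have hQ := norm_sq_lt hq
  have m1 := mult_one_add hq z 2 1 (by norm_num)
  have m2 := mult_one_add hq z⁻¹ 2 1 (by norm_num)
  have l1 := (m1.hasProd.mul m2.hasProd).tendsto_prod_nat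
  obtain ⟨C, hC0, hC⟩ := pw_bound hQ
  obtain ⟨D, hD0, hD⟩ := pe_bound hQ
  have l2 := tendsto_tsum_of_dominated_convergence (𝓕 := atTop)
    (f := fun (n : ℕ) (m : ℤ) =>
      pe (q ^ 2) (2 * n) * pw (q ^ 2) (n + -m) * pw (q ^ 2) (n + m) * tht q z m)
    (g := fun m => pE (q ^ 2) * (pE (q ^ 2))⁻¹ * (pE (q ^ 2))⁻¹ * tht q z m)
    (bound := fun m => D * C * C * ‖tht q z m‖)
    ((summable_tht hq hq0 hz).norm.mul_left _) ?_ ?_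
  · have l3 := l2.congr fun n => (finite_jtp hq hq0 hz n).tsum_eq
    have := tendsto_nhds_unique l1 l3
    rw [this, tsum_mul_left]
    have := pE_ne hQ
    field_simp
  · intro m
    refine Tendsto.mul_const _ ((Tendsto.mul ?_ (pw_tendsto hQ _)).mul (pw_tendsto hQ _))
    exact (pe_tendsto hQ).comp (tendsto_id.const_mul_atTop' (by norm_num : 0 < 2))
  · refine Eventually.of_forall fun n m => ?_
    simp only [norm_mul]
    gcongr
    · exact hD _
    · exact hC _
    · exact hC _

/-- splitting of the lattice by parity -/
lemma lattice_split {G : ℤ × ℤ → ℂ} (hG : Summable G) :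
    ∑' p, G p = (∑' p : ℤ × ℤ, G (p.1 + p.2, p.1 - p.2)) +
      ∑' p : ℤ × ℤ, G (p.2 - p.1, -p.1 - p.2 - 1) := by
  let F : (ℤ × ℤ) ⊕ (ℤ × ℤ) → ℤ × ℤ :=
    Sum.elim (fun p => (p.1 + p.2, p.1 - p.2)) (fun p => (p.2 - p.1, -p.1 - p.2 - 1))
  have hF : Function.Bijective F := by
    constructor
    · rintro (⟨a, b⟩ | ⟨a, b⟩) (⟨c, d⟩ | ⟨c, d⟩) h <;>
        simp only [F, Sum.elim_inl, Sum.elim_inr, Prod.mk.injEq] at h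
      · have h1 : a = c := by omega
        have h2 : b = d := by omega
        rw [h1, h2]
      · omega
      · omega
      · have h1 : a = c := by omega
        have h2 : b = d := by omega
        rw [h1, h2]
    · rintro ⟨a, b⟩
      rcases Int.emod_two_eq_zero_or_one (a + b) with h | h
      · exact ⟨Sum.inl ((a + b) / 2, (a - b) / 2), by simp [F]; omega⟩
      · exact ⟨Sum.inr ((-a - b - 1) / 2, (a - b - 1) / 2), by simp [F]; omega⟩
  have hs := (Equiv.ofBijective F hF).summable_iff.mpr hG
  rw [← (Equiv.ofBijective F hF).tsum_eq G]
  exact Summable.tsum_sum (f := fun x => G (F x)) (hs.comp_injective Sum.inl_injective)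
    (hs.comp_injective Sum.inr_injective)

lemma theta_mul {q z r y : ℂ} (hq : ‖q‖ < 1) (hq0 : q ≠ 0) (hz : z ≠ 0)
    (hr : ‖r‖ < 1) (hr0 : r ≠ 0) (hy : y ≠ 0) :
    (∑' m, tht q z m) * ∑' m, tht r y m = ∑' p : ℤ × ℤ, tht q z p.1 * tht r y p.2 :=
  tsum_mul_tsum_of_summable_norm (summable_tht hq hq0 hz).norm (summable_tht hr hr0 hy).norm

lemma theta_mul_split {q z : ℂ} (hq : ‖q‖ < 1) (hq0 : q ≠ 0) (hz : z ≠ 0) :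
    (∑' m, tht q z m) * ∑' m, tht q z m =
      (∑' p : ℤ × ℤ, tht q z (p.1 + p.2) * tht q z (p.1 - p.2)) +
      ∑' p : ℤ × ℤ, tht q z (p.2 - p.1) * tht q z (-p.1 - p.2 - 1) := by
  rw [theta_mul hq hq0 hz hq hq0 hz]
  exact lattice_split (summable_mul_of_summable_norm (summable_tht hq hq0 hz).norm
    (summable_tht hq hq0 hz).norm)

lemma neg_one_zpow_mul_even (a b : ℤ) (h : Even (a + b)) : (-1 : ℂ) ^ a * (-1 : ℂ) ^ b = 1 := by
  rw [← zpow_add₀ (by norm_num), h.neg_one_zpow]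

lemma neg_one_zpow_mul_odd (a b : ℤ) (h : Odd (a + b)) : (-1 : ℂ) ^ a * (-1 : ℂ) ^ b = -1 := by
  rw [← zpow_add₀ (by norm_num), h.neg_one_zpow]

lemma tht_even {q : ℂ} (hq0 : q ≠ 0) (m n : ℤ) :
    q ^ ((m + n) ^ 2) * q ^ ((m - n) ^ 2) = (q ^ 2) ^ (m ^ 2) * (q ^ 2) ^ (n ^ 2) := by
  rw [← zpow_natCast q 2, ← zpow_mul, ← zpow_mul, ← zpow_add₀ hq0, ← zpow_add₀ hq0]
  congr 1; push_cast; ring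

lemma tht_odd {q : ℂ} (hq0 : q ≠ 0) (m n : ℤ) :
    q ^ ((n - m) ^ 2) * q ^ ((-m - n - 1) ^ 2) =
      q * (((q ^ 2) ^ m * (q ^ 2) ^ (m ^ 2)) * ((q ^ 2) ^ n * (q ^ 2) ^ (n ^ 2))) := by
  nth_rw 3 [← zpow_one q]
  rw [← zpow_natCast q 2]
  simp only [← zpow_mul, ← zpow_add₀ hq0]
  congr 1; push_cast; ring

lemma A_sq {q : ℂ} (hq : ‖q‖ < 1) (hq0 : q ≠ 0) :
    (∑' m, tht q 1 m) ^ 2 = (∑' m, tht (q ^ 2) 1 m) ^ 2 + q * (∑' m, tht (q ^ 2) (q ^ 2) m) ^ 2 := by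
  have h0 : q ^ 2 ≠ 0 := pow_ne_zero _ hq0
  have h1 := norm_sq_lt hq
  rw [sq (∑' m, tht q _ m), sq (∑' m, tht (q ^ 2) 1 m), sq (∑' m, tht (q ^ 2) (q ^ 2) m),
    theta_mul_split hq hq0 one_ne_zero, theta_mul h1 h0 one_ne_zero h1 h0 one_ne_zero,
    theta_mul h1 h0 h0 h1 h0 h0, ← tsum_mul_left]
  congr 1
  · refine tsum_congr fun p => ?_
    simp only [tht, one_zpow, one_mul]
    exact tht_even hq0 _ _
  · refine tsum_congr fun p => ?_
    simp only [tht, one_zpow, one_mul]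
    exact tht_odd hq0 _ _

lemma B_sq {q : ℂ} (hq : ‖q‖ < 1) (hq0 : q ≠ 0) :
    (∑' m, tht q (-1) m) ^ 2 =
      (∑' m, tht (q ^ 2) 1 m) ^ 2 - q * (∑' m, tht (q ^ 2) (q ^ 2) m) ^ 2 := by
  have h0 : q ^ 2 ≠ 0 := pow_ne_zero _ hq0
  have h1 := norm_sq_lt hq
  have h2 : (-1 : ℂ) ≠ 0 := by norm_num
  rw [sq (∑' m, tht q _ m), sq (∑' m, tht (q ^ 2) 1 m), sq (∑' m, tht (q ^ 2) (q ^ 2) m),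
    theta_mul_split hq hq0 h2, theta_mul h1 h0 one_ne_zero h1 h0 one_ne_zero,
    theta_mul h1 h0 h0 h1 h0 h0, ← tsum_mul_left, sub_eq_add_neg, ← tsum_neg]
  congr 1
  · refine tsum_congr fun p => ?_
    simp only [tht, one_zpow, one_mul]
    rw [mul_mul_mul_comm, neg_one_zpow_mul_even _ _ ⟨p.1, by ring⟩, one_mul]
    exact tht_even hq0 _ _
  · refine tsum_congr fun p => ?_
    simp only [tht]
    rw [mul_mul_mul_comm, neg_one_zpow_mul_odd _ _ ⟨-p.1 - 1, by ring⟩, tht_odd hq0]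
    ring

lemma T_sq {q : ℂ} (hq : ‖q‖ < 1) (hq0 : q ≠ 0) :
    (∑' m, tht q q m) ^ 2 = 2 * ((∑' m, tht (q ^ 2) 1 m) * ∑' m, tht (q ^ 2) (q ^ 2) m) := by
  have h0 : q ^ 2 ≠ 0 := pow_ne_zero _ hq0
  have h1 := norm_sq_lt hq
  rw [sq, theta_mul_split hq hq0 hq0, two_mul]
  nth_rw 1 [mul_comm (∑' m, tht (q ^ 2) 1 m)]
  rw [theta_mul h1 h0 one_ne_zero h1 h0 h0,
    theta_mul h1 h0 h0 h1 h0 one_ne_zero]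
  congr 1
  · refine tsum_congr fun p => ?_
    simp only [tht, one_zpow, one_mul]
    rw [← zpow_natCast q 2]
    simp only [← zpow_mul, ← zpow_add₀ hq0]
    congr 1; push_cast; ring
  · refine tsum_congr fun p => ?_
    simp only [tht, one_zpow, one_mul]
    rw [← zpow_natCast q 2]
    simp only [← zpow_mul, ← zpow_add₀ hq0]
    congr 1; push_cast; ring

lemma abstruse {q : ℂ} (hq : ‖q‖ < 1) (hq0 : q ≠ 0) :
    (∑' m, tht q 1 m) ^ 4 = (∑' m, tht q (-1) m) ^ 4 + q * (∑' m, tht q q m) ^ 4 := by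
  have a := A_sq hq hq0
  have b := B_sq hq hq0
  have t := T_sq hq hq0
  have e : ∀ x : ℂ, x ^ 4 = (x ^ 2) ^ 2 := fun x => by ring
  rw [e, e, e, a, b, t]
  ring

/-- odd part of the Euler product -/
lemma odd_prod {q : ℂ} (hq : ‖q‖ < 1) :
    (∏' k : ℕ, (1 + (-1) * q ^ (2 * k + 1))) * pE (q ^ 2) = pE q := by
  have h1 := mult_one_add hq (-1) 2 1 (by norm_num)
  have h2 := mult_one_add hq (-1) 2 2 (by norm_num)
  have := tprod_even_mul_odd (f := fun j : ℕ => 1 - q ^ (j + 1))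
    (h1.congr fun k => by ring) (h2.congr fun k => by ring)
  rw [pE, pE, ← this]
  congr 1
  · exact tprod_congr fun k => by ring
  · exact tprod_congr fun k => by rw [← pow_mul]; ring_nf

lemma odd_prod_plus {q : ℂ} (hq : ‖q‖ < 1) :
    (∏' k : ℕ, (1 + 1 * q ^ (2 * k + 1))) * (∏' k : ℕ, (1 + (-1) * q ^ (2 * k + 1))) =
      ∏' k : ℕ, (1 + (-1) * (q ^ 2) ^ (2 * k + 1)) := by
  have h1 := mult_one_add hq (-1) 2 1 (by norm_num)
  have h2 := mult_one_add hq 1 2 1 (by norm_num)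
  rw [← h2.tprod_mul h1]
  exact tprod_congr fun k => by rw [← pow_mul]; ring

lemma even_plus {q : ℂ} (hq : ‖q‖ < 1) :
    (∏' k : ℕ, (1 + 1 * q ^ (1 * k + 1))) * pE q = pE (q ^ 2) := by
  have h1 := mult_one_add hq 1 1 1 (by norm_num)
  rw [pE, ← h1.tprod_mul (ModularForm.multipliable_one_sub_pow hq)]
  exact tprod_congr fun k => by rw [← pow_mul]; ring

lemma B_prod {q : ℂ} (hq : ‖q‖ < 1) (hq0 : q ≠ 0) :
    (∑' m, tht q (-1) m) * pE (q ^ 2) = pE q ^ 2 := by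
  rw [jtp hq hq0 (by norm_num), ← odd_prod hq, inv_neg_one]
  ring

lemma A_prod {q : ℂ} (hq : ‖q‖ < 1) (hq0 : q ≠ 0) :
    (∑' m, tht q 1 m) * (pE q ^ 2 * pE (q ^ 4) ^ 2) = pE (q ^ 2) ^ 5 := by
  have a := odd_prod hq
  have b := odd_prod_plus hq
  have c := odd_prod (norm_sq_lt hq)
  rw [jtp hq hq0 one_ne_zero, inv_one]
  rw [show (q ^ 2) ^ 2 = q ^ 4 by ring, ← b] at c
  rw [← a]
  generalize (∏' k : ℕ, (1 + 1 * q ^ (2 * k + 1))) = x at *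
  generalize (∏' k : ℕ, (1 + (-1) * q ^ (2 * k + 1))) = y at *
  rw [← c]; ring

lemma T_prod {q : ℂ} (hq : ‖q‖ < 1) (hq0 : q ≠ 0) :
    (∑' m, tht q q m) * pE (q ^ 2) = 2 * pE (q ^ 4) ^ 2 := by
  have a := even_plus (norm_sq_lt hq)
  have h1 := mult_one_add hq 1 2 2 (by norm_num)
  rw [jtp hq hq0 hq0, show q ^ 4 = (q ^ 2) ^ 2 by ring, ← a]
  have e1 : ∏' k : ℕ, (1 + q * q ^ (2 * k + 1)) = ∏' k : ℕ, (1 + 1 * (q ^ 2) ^ (1 * k + 1)) :=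
    tprod_congr fun k => by rw [← pow_mul]; ring
  have e2 : ∏' k : ℕ, (1 + q⁻¹ * q ^ (2 * k + 1)) =
      2 * ∏' k : ℕ, (1 + 1 * (q ^ 2) ^ (1 * k + 1)) := by
    have e3 : ∀ k : ℕ, 1 + q⁻¹ * q ^ (2 * k + 1) = 1 + q ^ (2 * k) := fun k => by
      rw [pow_succ]; field_simp
    rw [tprod_congr e3, tprod_eq_zero_mul' (h1.congr fun k => by ring)]
    congr 1
    · norm_num
    · exact tprod_congr fun k => by rw [← pow_mul]; ring
  rw [e1, e2]; ring

lemma euler_identity {q : ℂ} (hq : ‖q‖ < 1) (hq0 : q ≠ 0) :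
    pE q ^ 16 * pE (q ^ 4) ^ 8 + 16 * q * (pE q ^ 8 * pE (q ^ 4) ^ 16) = pE (q ^ 2) ^ 24 := by
  have a := A_prod hq hq0
  have b := B_prod hq hq0
  have t := T_prod hq hq0
  have h := abstruse hq hq0
  generalize (∑' m, tht q 1 m) = A at *
  generalize (∑' m, tht q (-1) m) = B at *
  generalize (∑' m, tht q q m) = T at *
  generalize pE q = x at *
  generalize pE (q ^ 4) = w at *
  generalize pE (q ^ 2) = y at *
  have : y ^ 24 = y ^ 4 * (y ^ 5) ^ 4 := by ring
  rw [this, ← a, mul_pow, h]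
  have b8 : x ^ 8 = B ^ 4 * y ^ 4 := by rw [← mul_pow, b]; ring
  have t8 : 16 * w ^ 8 = T ^ 4 * y ^ 4 := by rw [← mul_pow, t]; ring
  linear_combination x ^ 8 * w ^ 8 * b8 + q * x ^ 8 * w ^ 8 * t8

theorem X0_64_fermat (τ : ℂ) (hτ : 0 < τ.im) :
    (η (4 * τ) ^ 2 * η (8 * τ) ^ 2) ^ 4 + (2 * η (8 * τ) ^ 2 * η (16 * τ) ^ 2) ^ 4 =
      (η (8 * τ) ^ 8 / (η (4 * τ) ^ 2 * η (16 * τ) ^ 2)) ^ 4 := by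
  set u : ℂ := Complex.exp (Real.pi * Complex.I * (4 * τ) / 12) with hu
  have hu0 : u ≠ 0 := Complex.exp_ne_zero _
  set q : ℂ := u ^ 24 with hqu
  have hq0 : q ≠ 0 := pow_ne_zero _ hu0
  have hqe : q = Complex.exp (2 * Real.pi * Complex.I * (4 * τ)) := by
    rw [hqu, hu, ← Complex.exp_nat_mul]; congr 1; push_cast; ring
  have hq : ‖q‖ < 1 := by
    rw [hqe, Complex.norm_exp, Real.exp_lt_one_iff]
    simp
    have := Real.pi_pos
    positivity
  have key : ∀ r : ℕ, η (4 * r * τ) = u ^ r * pE (q ^ r) := fun r => by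
    rw [η, pE, hu, ← Complex.exp_nat_mul]
    congr 1
    · congr 1; ring
    · refine tprod_congr fun n => ?_
      rw [hqe, ← Complex.exp_nat_mul, ← Complex.exp_nat_mul]
      congr 2; push_cast; ring
  have k1 : η (4 * τ) = u * pE q := by simpa using key 1
  have k2 : η (8 * τ) = u ^ 2 * pE (q ^ 2) := by
    rw [← key 2]; congr 1; push_cast; ring
  have k4 : η (16 * τ) = u ^ 4 * pE (q ^ 4) := by
    rw [← key 4]; congr 1; push_cast; ring
  have n1 : pE q ≠ 0 := pE_ne hq
  have n4 : pE (q ^ 4) ≠ 0 := by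
    have := pE_ne (norm_sq_lt (norm_sq_lt hq))
    rwa [← pow_mul] at this
  have h := euler_identity hq hq0
  rw [k1, k2, k4, div_pow, eq_div_iff (by positivity)]
  rw [hqu] at h ⊢
  linear_combination u ^ 64 * pE ((u ^ 24) ^ 2) ^ 8 * h
end
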